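/- arXiv:2008.12437 — 11 statements merged into one kernel-verified Lean document; each statement's English description precedes it below -/
import Mathlib

section
/- Let V be an n-dimensional representation of a group G over a field k, and let m be an integer with 0 < m < n. Then V is m-dense if and only if V is (n-m)-dense. -/
/-!
Let `p + q = n = dim V`. The wedge product `⋀^p V × ⋀^q V → ⋀^n V` takes values in a line and is
nondegenerate: multiplying `w ∈ ⋀^q V` by the basis monomial indexed by the complement of a
`q`-element set `t` isolates, up to sign, the coordinate of `w` at `t`
(`eq_zero_of_forall_mul_eq_zero`).

For a `G`-invariant `W ≤ ⋀^q V`, the annihilator `wedgeAnn p W` of `W` in `⋀^p V` is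
`G`-invariant, because `G` acts by algebra automorphisms. If `V` is `p`-dense, this annihilator is
either all of `⋀^p V`, and then `W = 0` by nondegeneracy, or `0`, and then `⋀^p V` embeds into
`Hom(W, ⋀^n V)`, so that `dim W ≥ (n choose p) = (n choose q) = dim ⋀^q V` and `W = ⋀^q V`.
The relation between `p` and `q` being symmetric, this gives both implications.
-/

open Module

variable {k G V : Type*} [Field k] [Group G] [AddCommGroup V] [Module k V]

/-- A finite-dimensional representation `ρ : G → GL(V)` is `m`-thick if for any subspaces
`V₁, V₂ ⊆ V` with `dim V₁ = m` and `dim V₂ = dim V - m` there is `g ∈ G` with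
`(ρ(g) V₁) ⊕ V₂ = V`. -/
def IsMThick (ρ : Representation k G V) (m : ℕ) : Prop :=
  ∀ V₁ V₂ : Submodule k V, finrank k V₁ = m → finrank k V₂ = finrank k V - m →
    ∃ g : G, IsCompl (V₁.map (ρ g)) V₂

/-- A representation is `m`-dense if the induced representation on the `m`-th exterior power
`⋀^m V` (a submodule of the exterior algebra, on which `g` acts by the functorially induced map)
is irreducible: `⋀^m V` is nonzero and has no `G`-invariant subspace other than `0` and itself. -/
def IsMDense (ρ : Representation k G V) (m : ℕ) : Prop :=
  ⋀[k]^m V ≠ ⊥ ∧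
  ∀ W : Submodule k (ExteriorAlgebra k V), W ≤ ⋀[k]^m V →
    (∀ g : G, W.map (ExteriorAlgebra.map (ρ g)).toLinearMap ≤ W) →
    W = ⊥ ∨ W = ⋀[k]^m V

/-- A representation is irreducible if `V` is nonzero and has no `G`-invariant subspace
other than `0` and `V`. -/
def RepIrreducible (ρ : Representation k G V) : Prop :=
  (∃ v : V, v ≠ 0) ∧
  ∀ W : Submodule k V, (∀ g : G, W.map (ρ g) ≤ W) → W = ⊥ ∨ W = ⊤

/-- A representation is thick if it is `m`-thick for every `0 < m < dim V`. -/
def IsThick (ρ : Representation k G V) : Prop :=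
  ∀ m : ℕ, 0 < m → m < finrank k V → IsMThick ρ m

/-- A representation is dense if it is `m`-dense for every `0 < m < dim V`. -/
def IsDense (ρ : Representation k G V) : Prop :=
  ∀ m : ℕ, 0 < m → m < finrank k V → IsMDense ρ m

/-- The subspace of `⋀^p V` consisting of those `x` with `x ∧ w = 0` for all `w ∈ W`. -/
def wedgeAnn (p : ℕ) (W : Submodule k (ExteriorAlgebra k V)) :
    Submodule k (ExteriorAlgebra k V) where
  carrier := {x | x ∈ ⋀[k]^p V ∧ ∀ w ∈ W, x * w = 0}
  add_mem' := by
    rintro a b ⟨ha, ha'⟩ ⟨hb, hb'⟩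
    exact ⟨add_mem ha hb, fun w hw => by rw [add_mul, ha' w hw, hb' w hw, add_zero]⟩
  zero_mem' := ⟨zero_mem _, fun w _ => zero_mul w⟩
  smul_mem' := by
    rintro c a ⟨ha, ha'⟩
    exact ⟨Submodule.smul_mem _ c ha, fun w hw => by rw [smul_mul_assoc, ha' w hw, smul_zero]⟩

lemma map_mem_exteriorPower (f : V →ₗ[k] V) (p : ℕ) {x : ExteriorAlgebra k V}
    (hx : x ∈ ⋀[k]^p V) : ExteriorAlgebra.map f x ∈ ⋀[k]^p V := by
  have h : (⋀[k]^p V).map (ExteriorAlgebra.map f).toLinearMap ≤ ⋀[k]^p V := by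
    rw [ExteriorAlgebra.exteriorPower, Submodule.map_pow, ExteriorAlgebra.ι_range_map_map]
    exact pow_le_pow_left' LinearMap.map_le_range p
  exact h (Submodule.mem_map_of_mem hx)

lemma map_wedgeAnn_le (ρ : Representation k G V) (p : ℕ) (W : Submodule k (ExteriorAlgebra k V))
    (hW : ∀ g : G, W.map (ExteriorAlgebra.map (ρ g)).toLinearMap ≤ W) (g : G) :
    (wedgeAnn p W).map (ExteriorAlgebra.map (ρ g)).toLinearMap ≤ wedgeAnn p W := by
  rintro _ ⟨x, ⟨hx, hx'⟩, rfl⟩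
  refine ⟨map_mem_exteriorPower _ p hx, fun w hw => ?_⟩
  have hw' : ExteriorAlgebra.map (ρ g⁻¹) w ∈ W := hW g⁻¹ (Submodule.mem_map_of_mem hw)
  have hgw : ExteriorAlgebra.map (ρ g) (ExteriorAlgebra.map (ρ g⁻¹) w) = w := by
    have h : ρ g ∘ₗ ρ g⁻¹ = LinearMap.id := by
      rw [← Module.End.mul_eq_comp, ← map_mul, mul_inv_cancel, map_one]; rfl
    rw [← AlgHom.comp_apply, ExteriorAlgebra.map_comp_map, h, ExteriorAlgebra.map_id]; rfl
  -- `gx ∧ w = g (x ∧ g⁻¹w)`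
  have h := congrArg (ExteriorAlgebra.map (ρ g)) (hx' _ hw')
  rwa [map_mul, hgw, map_zero] at h

/-- Nondegeneracy of the wedge pairing in complementary degrees. -/
lemma eq_zero_of_forall_mul_eq_zero [FiniteDimensional k V] {p q : ℕ}
    (hpq : p + q = finrank k V) {w : ExteriorAlgebra k V} (hw : w ∈ ⋀[k]^q V)
    (h : ∀ x ∈ ⋀[k]^p V, x * w = 0) : w = 0 := by
  classical
  let b := Module.finBasis k V
  let B := b.exteriorPower q
  suffices h0 : B.repr ⟨w, hw⟩ = 0 by
    have := B.repr.map_eq_zero_iff.mp h0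
    exact congrArg Subtype.val this
  ext t
  have hwsum : w = ∑ u, B.repr ⟨w, hw⟩ u • b.ExteriorAlgebra (u : Finset _) := by
    have := congrArg Subtype.val (B.sum_repr ⟨w, hw⟩)
    simp only [Submodule.coe_sum, Submodule.coe_smul] at this
    refine this.symm.trans ?_
    exact Finset.sum_congr rfl fun u _ => by rw [ExteriorAlgebra.basis_eq_coe_basis]
  have htq : (t : Finset (Fin (finrank k V))).card = q := t.2
  let s : Set.powersetCard (Fin (finrank k V)) p :=
    ⟨(t : Finset (Fin (finrank k V)))ᶜ, by
      change _ = _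
      rw [Finset.card_compl, Fintype.card_fin, htq]; omega⟩
  have hs : s.val = t.valᶜ := rfl
  have hmem : b.ExteriorAlgebra (s : Finset _) ∈ ⋀[k]^p V := by
    rw [ExteriorAlgebra.basis_eq_coe_basis]; exact Subtype.property _
  have h1 := h _ hmem
  rw [hwsum, Finset.mul_sum, Finset.sum_eq_single t] at h1
  · have hd : Disjoint s.val t.val := by rw [hs]; exact disjoint_compl_left
    rw [mul_smul_comm, ExteriorAlgebra.basis_mul_of_disjoint b s t hd] at h1
    rcases smul_eq_zero.mp h1 with h2 | h2
    · exact h2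
    · rw [smul_eq_zero_iff_eq] at h2
      exact absurd h2 (b.ExteriorAlgebra.ne_zero _)
  · intro u _ hut
    rw [mul_smul_comm, ExteriorAlgebra.basis_mul_of_not_disjoint b s u, smul_zero]
    -- a `q`-element set disjoint from the complement of `t` lies in `t`, hence equals `t`
    intro hd
    rw [hs, disjoint_compl_left_iff] at hd
    apply hut
    apply Subtype.ext
    refine Finset.eq_of_subset_of_card_le hd ?_
    have : u.val.card = q := u.2
    have : t.val.card = q := t.2
    omega
  · intro ht
    exact absurd (Finset.mem_univ _) ht

/-- If nothing nonzero in `⋀^p V` annihilates `W ≤ ⋀^q V`, then `⋀^p V` embeds into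
`Hom(W, ⋀^n V)`, which has the dimension of `W`. -/
lemma eq_exteriorPower_of_wedgeAnn_eq_bot [FiniteDimensional k V] {p q : ℕ}
    (hpq : p + q = finrank k V) {W : Submodule k (ExteriorAlgebra k V)} (hW : W ≤ ⋀[k]^q V)
    (h : wedgeAnn p W = ⊥) : W = ⋀[k]^q V := by
  have : FiniteDimensional k W := Submodule.finiteDimensional_of_le hW
  let F : ⋀[k]^p V →ₗ[k] W →ₗ[k] ⋀[k]^(finrank k V) V :=
    LinearMap.mk₂ k
      (fun x w => ⟨x.1 * w.1, hpq ▸ SetLike.mul_mem_graded x.2 (hW w.2)⟩)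
      (fun x y w => Subtype.ext (add_mul _ _ _))
      (fun c x w => Subtype.ext (smul_mul_assoc _ _ _))
      (fun x w z => Subtype.ext (mul_add _ _ _))
      (fun c x w => Subtype.ext (mul_smul_comm _ _ _))
  have hF : Function.Injective F := by
    refine (injective_iff_map_eq_zero F).mpr fun x hx => ?_
    have hx' : x.1 ∈ wedgeAnn p W :=
      ⟨x.2, fun w hw => congrArg Subtype.val (LinearMap.congr_fun hx ⟨w, hw⟩)⟩
    rw [h] at hx'
    exact Subtype.ext hx'
  have hle := LinearMap.finrank_le_finrank_of_injective hF
  rw [Module.finrank_linearMap, exteriorPower.finrank_eq, exteriorPower.finrank_eq,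
    Nat.choose_self, mul_one] at hle
  refine Submodule.eq_of_le_of_finrank_le hW ?_
  rwa [exteriorPower.finrank_eq, ← Nat.choose_symm_of_eq_add hpq.symm]

lemma IsMDense.complement [FiniteDimensional k V] {ρ : Representation k G V} {p q : ℕ}
    (hpq : p + q = finrank k V) (hp : IsMDense ρ p) : IsMDense ρ q := by
  refine ⟨fun h => ?_, fun W hW hinv => ?_⟩
  · have h1 : finrank k (⋀[k]^q V) = 0 := by rw [h, finrank_bot]
    rw [exteriorPower.finrank_eq] at h1
    have : 0 < (finrank k V).choose q := Nat.choose_pos (by omega)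
    omega
  · rcases hp.2 (wedgeAnn p W) (fun x hx => hx.1) (map_wedgeAnn_le ρ p W hinv) with h | h
    · exact Or.inr (eq_exteriorPower_of_wedgeAnn_eq_bot hpq hW h)
    · refine Or.inl ((Submodule.eq_bot_iff _).mpr fun w hw => ?_)
      refine eq_zero_of_forall_mul_eq_zero hpq (hW hw) fun x hx => ?_
      rw [← h] at hx
      exact hx.2 w hw

/-- Let `V` be an `n`-dimensional representation of a group `G` over a field `k`, and
`0 < m < n`. Then `V` is `m`-dense iff `V` is `(n-m)`-dense. -/
theorem mDense_iff_mDense_complement [FiniteDimensional k V] (ρ : Representation k G V)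
    (n m : ℕ) (hn : finrank k V = n) (h0 : 0 < m) (hm : m < n) :
    IsMDense ρ m ↔ IsMDense ρ (n - m) :=
  ⟨IsMDense.complement (by omega), IsMDense.complement (by omega)⟩
end

section
/- Let V be a finite-dimensional representation of a group G over a field k and let m be an integer with 0 < m < dim V. If V is m-dense then V is m-thick. -/
/-!
Suppose no translate `ρ(g) V₁` is complementary to `V₂`. Choose a basis `v` of `V₁` and let `φ` be
the alternating `m`-form on `V` obtained by pulling back a determinant on the `m`-dimensional
quotient `V ⧸ V₂`. For every `g` the form `φ` vanishes on `ρ(g) v`, because a nonzero value makes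
`V₁ → V ⧸ V₂`, `x ↦ [ρ(g) x]`, an isomorphism (`isCompl_of_det_ne_zero`). The span of the
vectors `ρ(g) v₁ ∧ ⋯ ∧ ρ(g) vₘ` is a nonzero invariant subspace of `⋀^m V`, hence everything by
density, so the linear functional on `⋀^m V` given by `φ` vanishes. This is absurd, as `φ` takes
the value `1` on a lift of the basis of `V ⧸ V₂`.
-/

open Module

variable {k G V : Type*} [Field k] [Group G] [AddCommGroup V] [Module k V]

/-- The linear functional on the exterior algebra induced by an alternating `m`-form `φ`, extended
by zero to the degrees other than `m`. -/
noncomputable def extFunctional {m : ℕ} (φ : V [⋀^Fin m]→ₗ[k] k) : ExteriorAlgebra k V →ₗ[k] k :=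
  ExteriorAlgebra.liftAlternating (Pi.single m φ)

lemma extFunctional_ιMulti {m : ℕ} (φ : V [⋀^Fin m]→ₗ[k] k) (v : Fin m → V) :
    extFunctional φ (ExteriorAlgebra.ιMulti k m v) = φ v := by
  simp [extFunctional, ExteriorAlgebra.liftAlternating_apply_ιMulti]

/-- If a linear map `T` carries a basis of `V₁` to vectors whose classes modulo `V₂` have nonzero
determinant, then `T V₁` is a complement of `V₂`. -/
lemma isCompl_of_det_ne_zero {m : ℕ} {V₁ V₂ : Submodule k V} (T : V →ₗ[k] V)
    (v : Basis (Fin m) k V₁) (b : Basis (Fin m) k (V ⧸ V₂))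
    (hdet : b.det (fun i => V₂.mkQ (T (v i))) ≠ 0) : IsCompl (V₁.map T) V₂ := by
  obtain ⟨hli, hsp⟩ := (Basis.is_basis_iff_det b).2 (isUnit_iff_ne_zero.2 hdet)
  let f : V₁ ≃ₗ[k] V ⧸ V₂ := v.equiv (Basis.mk hli hsp.ge) (Equiv.refl _)
  have hf : ∀ y : V₁, f y = V₂.mkQ (T y) := by
    have : (f : V₁ →ₗ[k] V ⧸ V₂) = V₂.mkQ ∘ₗ T ∘ₗ V₁.subtype :=
      v.ext fun i => by simp [f]
    exact fun y => LinearMap.congr_fun this y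
  constructor
  · rw [Submodule.disjoint_def]
    rintro _ ⟨y, hy, rfl⟩ hx
    have h0 : f ⟨y, hy⟩ = 0 := by
      rw [hf]
      simpa using hx
    have hy0 : (⟨y, hy⟩ : V₁) = 0 := f.map_eq_zero_iff.1 h0
    have : y = 0 := congrArg Subtype.val hy0
    simp [this]
  · rw [codisjoint_iff, eq_top_iff]
    intro x _
    obtain ⟨y, hy⟩ := f.surjective (V₂.mkQ x)
    rw [hf] at hy
    have hmem : x - T y ∈ V₂ := (Submodule.Quotient.eq V₂).1 hy.symm
    exact Submodule.mem_sup.2 ⟨T y, ⟨y, y.2, rfl⟩, x - T y, hmem, by abel⟩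

/-- The wedge of a basis of a subspace is nonzero: the determinant form of that basis, pulled back
along a projection onto the subspace, takes the value `1` on it. -/
lemma ιMulti_basis_ne_zero {m : ℕ} {V₁ : Submodule k V} (v : Basis (Fin m) k V₁) :
    ExteriorAlgebra.ιMulti k m (fun i => (v i : V)) ≠ 0 := by
  intro h
  obtain ⟨p, hp⟩ := V₁.subtype.exists_leftInverse_of_injective V₁.ker_subtype
  have hp' : ∀ y : V₁, p y = y := LinearMap.congr_fun hp
  have h1 := extFunctional_ιMulti (v.det.compLinearMap p) (fun i => (v i : V))
  rw [h, map_zero, AlternatingMap.compLinearMap_apply] at h1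
  have h2 : (fun i => p (v i : V)) = v := funext fun i => hp' _
  have h3 : v.det (fun i => p (v i : V)) = 0 := h1.symm
  rw [h2, v.det_self] at h3
  exact one_ne_zero h3

/-- If a finite-dimensional representation `V` is `m`-dense for `0 < m < dim V`,
then it is `m`-thick. -/
theorem mDense_implies_mThick [FiniteDimensional k V] (ρ : Representation k G V)
    (m : ℕ) (h0 : 0 < m) (hm : m < finrank k V) (h : IsMDense ρ m) :
    IsMThick ρ m := by
  intro V₁ V₂ h₁ h₂
  by_contra hno
  have hQ : finrank k (V ⧸ V₂) = m := by
    have := V₂.finrank_quotient_add_finrank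
    omega
  let v : Basis (Fin m) k V₁ := finBasisOfFinrankEq k V₁ h₁
  let b : Basis (Fin m) k (V ⧸ V₂) := finBasisOfFinrankEq k _ hQ
  let φ : V [⋀^Fin m]→ₗ[k] k := b.det.compLinearMap V₂.mkQ
  have hφ : ∀ g : G, φ (fun i => ρ g (v i)) = 0 := by
    intro g
    by_contra hne
    exact hno ⟨g, isCompl_of_det_ne_zero (ρ g) v b hne⟩
  let w : G → ExteriorAlgebra k V := fun g => ExteriorAlgebra.ιMulti k m (fun i => ρ g (v i))
  let W : Submodule k (ExteriorAlgebra k V) := Submodule.span k (Set.range w)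
  have hmem : ∀ u : Fin m → V, ExteriorAlgebra.ιMulti k m u ∈ ⋀[k]^m V := fun u =>
    ExteriorAlgebra.ιMulti_range k m ⟨u, rfl⟩
  have hW : W ≤ ⋀[k]^m V := by
    refine Submodule.span_le.2 ?_
    rintro _ ⟨g, rfl⟩
    exact hmem _
  have hinv : ∀ g : G, W.map (ExteriorAlgebra.map (ρ g)).toLinearMap ≤ W := by
    intro g
    rw [Submodule.map_span_le]
    rintro _ ⟨g', rfl⟩
    refine Submodule.subset_span ⟨g * g', ?_⟩
    simp [w, ExteriorAlgebra.map_apply_ιMulti, Function.comp_def]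
  have hker : W ≤ LinearMap.ker (extFunctional φ) := by
    refine Submodule.span_le.2 ?_
    rintro _ ⟨g, rfl⟩
    exact (extFunctional_ιMulti φ _).trans (hφ g)
  rcases h.2 W hW hinv with hbot | htop
  · have h1 : w 1 ∈ W := Submodule.subset_span ⟨1, rfl⟩
    rw [hbot, Submodule.mem_bot] at h1
    exact ιMulti_basis_ne_zero v (by simpa [w] using h1)
  · choose u hu using fun i => V₂.mkQ_surjective (b i)
    have h1 : extFunctional φ (ExteriorAlgebra.ιMulti k m u) = 0 := hker (htop ▸ hmem u)
    rw [extFunctional_ιMulti] at h1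
    have h2 : b.det (fun i => V₂.mkQ (u i)) = 0 := h1
    rw [funext hu, b.det_self] at h2
    exact one_ne_zero h2
end

section
/- Let V be a finite-dimensional representation of a group G over a field k and let m be an integer with 0 < m < dim V. If V is m-thick then V is 1-thick. -/
/-!
`1`-thickness says that no `G`-orbit of a line lies in a hyperplane. If the orbit of a line `L` lies
in a hyperplane `H`, its span `W` is a `G`-invariant subspace with `0 ≠ W ≠ V`. Choose `V₁` and `V₂`
of dimensions `m` and `dim V - m`, each comparable with `W` for inclusion
(`exists_finrank_eq_and_comparable`). By invariance, every translate `g V₁` stands in the same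
relation to `W` as `V₁`, and then `g V₁` and `V₂` cannot be complementary: either both contain
`W ≠ 0`, or both lie in `W ≠ V`, or one of them contains the other, which would force one of them to
be `0`, against `0 < m < dim V`.
-/

open Module

variable {k G V : Type*} [Field k] [Group G] [AddCommGroup V] [Module k V]

/-- A subspace `W` contains subspaces of every dimension up to its own. -/
lemma exists_le_finrank_eq [FiniteDimensional k V] (W : Submodule k V) (d : ℕ)
    (hd : d ≤ finrank k W) : ∃ U : Submodule k V, U ≤ W ∧ finrank k U = d := by
  obtain ⟨f, hf⟩ := exists_linearIndependent_of_le_finrank hd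
  refine ⟨(Submodule.span k (Set.range f)).map W.subtype, Submodule.map_subtype_le _ _, ?_⟩
  rw [Submodule.finrank_map_subtype_eq, finrank_span_eq_card hf, Fintype.card_fin]

/-- In every dimension there is a subspace comparable with a given one. -/
lemma exists_finrank_eq_and_comparable [FiniteDimensional k V] (W : Submodule k V) (d : ℕ)
    (hd : d ≤ finrank k V) : ∃ U : Submodule k V, finrank k U = d ∧ (U ≤ W ∨ W ≤ U) := by
  rcases le_total d (finrank k W) with hW | hW
  · obtain ⟨U, hU, hUd⟩ := exists_le_finrank_eq W d hW
    exact ⟨U, hUd, Or.inl hU⟩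
  · obtain ⟨C, hC⟩ := W.exists_isCompl
    have hWC := Submodule.finrank_add_eq_of_isCompl hC
    obtain ⟨U, hU, hUd⟩ := exists_le_finrank_eq C (d - finrank k W) (by omega)
    refine ⟨W ⊔ U, ?_, Or.inr le_sup_left⟩
    have hsum := Submodule.finrank_sup_add_finrank_inf_eq W U
    rw [(hC.disjoint.mono_right hU).eq_bot, finrank_bot] at hsum
    omega

/-- An `m`-thick representation with `0 < m < dim V` has no invariant subspace other than `0`
and `V`. -/
lemma IsMThick.eq_bot_or_eq_top [FiniteDimensional k V] {ρ : Representation k G V} {m : ℕ}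
    (h0 : 0 < m) (hm : m < finrank k V) (h : IsMThick ρ m) (W : Submodule k V)
    (hW : ∀ g : G, W.map (ρ g) = W) : W = ⊥ ∨ W = ⊤ := by
  obtain ⟨V₁, hd₁, h₁⟩ := exists_finrank_eq_and_comparable W m hm.le
  obtain ⟨V₂, hd₂, h₂⟩ := exists_finrank_eq_and_comparable W (finrank k V - m) (Nat.sub_le _ _)
  obtain ⟨g, hg⟩ := h V₁ V₂ hd₁ hd₂
  have h₁' : V₁.map (ρ g) ≤ W ∨ W ≤ V₁.map (ρ g) := by
    rw [← hW g]
    exact h₁.imp (fun hle => Submodule.map_mono hle) (fun hle => Submodule.map_mono hle)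
  have hsum := Submodule.finrank_add_eq_of_isCompl hg
  have hle := Submodule.finrank_map_le (ρ g) V₁
  rcases h₁' with h₁' | h₁' <;> rcases h₂ with h₂ | h₂
  · exact Or.inr (top_le_iff.mp (hg.sup_eq_top ▸ sup_le h₁' h₂))
  · have hbot : V₁.map (ρ g) = ⊥ := hg.disjoint.eq_bot_of_le (h₁'.trans h₂)
    rw [hbot, finrank_bot] at hsum
    omega
  · have hbot : V₂ = ⊥ := hg.disjoint.symm.eq_bot_of_le (h₂.trans h₁')
    rw [hbot, finrank_bot] at hd₂
    omega
  · exact Or.inl (le_bot_iff.mp (hg.inf_eq_bot ▸ le_inf h₁' h₂))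

/-- If a finite-dimensional representation `V` is `m`-thick for some `0 < m < dim V`,
then it is `1`-thick. -/
theorem mThick_implies_oneThick [FiniteDimensional k V] (ρ : Representation k G V)
    (m : ℕ) (h0 : 0 < m) (hm : m < finrank k V) (h : IsMThick ρ m) :
    IsMThick ρ 1 := by
  intro L H hL hH
  have hmap (g g' : G) (U : Submodule k V) : (U.map (ρ g')).map (ρ g) = U.map (ρ (g * g')) := by
    rw [map_mul, Module.End.mul_eq_comp, Submodule.map_comp]
  have hL1 : L.map (ρ 1) = L := by
    rw [map_one, Module.End.one_eq_id, Submodule.map_id]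
  by_cases hex : ∃ g : G, ¬ L.map (ρ g) ≤ H
  · obtain ⟨g, hg⟩ := hex
    refine ⟨g, ?_⟩
    have hLg : finrank k (L.map (ρ g)) = 1 := by
      rw [← hL]
      exact (Submodule.equivMapOfInjective (ρ g) (ρ.apply_bijective g).injective L).finrank_eq.symm
    rw [Submodule.isCompl_iff_disjoint _ _ (by omega), disjoint_iff,
      ← Submodule.finrank_eq_zero (R := k)]
    have hlt := Submodule.finrank_lt_finrank_of_lt (inf_lt_left.mpr hg)
    omega
  · push Not at hex
    -- The span of the orbit of `L`.
    set W : Submodule k V := ⨆ g : G, L.map (ρ g) with hWdef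
    have hW (g : G) : W.map (ρ g) = W := by
      rw [hWdef, Submodule.map_iSup]
      simp only [hmap]
      exact (Equiv.mulLeft g).iSup_comp (g := fun g' => L.map (ρ g'))
    have hLW : L ≤ W := hL1.ge.trans (le_iSup (fun g => L.map (ρ g)) 1)
    have hWH : W ≤ H := iSup_le hex
    rcases h.eq_bot_or_eq_top h0 hm W hW with hbot | htop
    · rw [hbot, le_bot_iff] at hLW
      rw [hLW, finrank_bot] at hL
      omega
    · rw [htop, top_le_iff] at hWH
      rw [hWH, finrank_top] at hH
      omega
end

section
/- Let V be a finite-dimensional representation of a group G over a field k with dim V ≥ 1. If V is dense then V is thick, and if V is thick then V is irreducible. -/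
/-!
Dense implies thick: let `V₁` have basis `v₁, …, vₘ` and let `V₂` have codimension `m`. Composing
`V → V ⧸ V₂` with a determinant on the `m`-dimensional quotient gives an alternating form `quotDet`,
hence a linear functional on `⋀^m V`, whose value at `w₁ ∧ ⋯ ∧ wₘ` is nonzero exactly when the `wᵢ`
span a complement of `V₂`. If no translate of `V₁` is a complement of `V₂`, this functional vanishes
on the `G`-orbit of `v₁ ∧ ⋯ ∧ vₘ ≠ 0`. By `m`-density the orbit spans `⋀^m V`, so the functional is
zero on `⋀^m V`, which is absurd since `V₂` has some complement.

Thick implies irreducible: if `W` is a proper nonzero invariant subspace, take a line `V₁ ⊆ W` and a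
hyperplane `V₂ ⊇ W`. Every translate of `V₁` lies in `W ⊆ V₂`, contradicting `1`-thickness.
-/

open Module

variable {k G V : Type*} [Field k] [Group G] [AddCommGroup V] [Module k V]

/-- The alternating form `w ↦ det (w₁ mod U, …, wₘ mod U)` on `V`, the determinant being taken with
respect to a basis `b` of `V ⧸ U`. -/
noncomputable def quotDet {m : ℕ} {U : Submodule k V} (b : Basis (Fin m) k (V ⧸ U)) :
    V [⋀^Fin m]→ₗ[k] k :=
  b.det.compLinearMap U.mkQ

/-- The linear functional on the exterior algebra that is induced by `quotDet b` in degree `m` and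
is zero in all other degrees. -/
noncomputable def quotFunctional {m : ℕ} {U : Submodule k V} (b : Basis (Fin m) k (V ⧸ U)) :
    ExteriorAlgebra k V →ₗ[k] k :=
  ExteriorAlgebra.liftAlternating (Pi.single m (quotDet b))

lemma quotFunctional_ιMulti {m : ℕ} {U : Submodule k V} (b : Basis (Fin m) k (V ⧸ U))
    (w : Fin m → V) :
    quotFunctional b (ExteriorAlgebra.ιMulti k m w) = b.det (U.mkQ ∘ w) := by
  rw [quotFunctional, ExteriorAlgebra.liftAlternating_apply_ιMulti, Pi.single_eq_same]
  rfl

lemma isCompl_of_det_ne_zero_s5 [FiniteDimensional k V] {m : ℕ} {U S : Submodule k V}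
    (b : Basis (Fin m) k (V ⧸ U)) (w : Fin m → V) (hw : ∀ i, w i ∈ S) (hS : finrank k S ≤ m)
    (hdet : b.det (U.mkQ ∘ w) ≠ 0) : IsCompl S U := by
  have hspan := ((b.is_basis_iff_det (v := U.mkQ ∘ w)).2 (isUnit_iff_ne_zero.2 hdet)).2
  have hmap : S.map U.mkQ = ⊤ := by
    rw [eq_top_iff, ← hspan, Submodule.span_le]
    rintro _ ⟨i, rfl⟩
    exact ⟨w i, hw i, rfl⟩
  have hsup : S ⊔ U = ⊤ := by
    have h := congrArg (Submodule.comap U.mkQ) hmap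
    rwa [Submodule.comap_map_mkQ, Submodule.comap_top, sup_comm] at h
  have h1 := Submodule.finrank_sup_add_finrank_inf_eq S U
  have h2 := U.finrank_quotient_add_finrank
  have h3 : finrank k (V ⧸ U) = m := by simp [finrank_eq_card_basis b]
  rw [hsup, finrank_top] at h1
  refine ⟨disjoint_iff.2 (Submodule.finrank_eq_zero.1 ?_), codisjoint_iff.2 hsup⟩
  omega

/-- The wedge product of linearly independent vectors is nonzero: `quotFunctional` for a complement
of their span detects it. -/
lemma ιMulti_ne_zero_of_linearIndependent [FiniteDimensional k V] {m : ℕ} {v : Fin m → V}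
    (hv : LinearIndependent k v) : ExteriorAlgebra.ιMulti k m v ≠ 0 := by
  obtain ⟨C, hC⟩ := Submodule.exists_isCompl (Submodule.span k (Set.range v))
  have hrank : finrank k (V ⧸ C) = m := by
    rw [(Submodule.quotientEquivOfIsCompl C _ hC.symm).finrank_eq, finrank_span_eq_card hv,
      Fintype.card_fin]
  let b := finBasisOfFinrankEq k (V ⧸ C) hrank
  have hli : LinearIndependent k (C.mkQ ∘ v) := hv.map (by simpa using hC.disjoint)
  have hunit : IsUnit (b.det (C.mkQ ∘ v)) := (b.is_basis_iff_det).1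
    ⟨hli, hli.span_eq_top_of_card_eq_finrank' (by simp [hrank])⟩
  intro h0
  rw [← quotFunctional_ιMulti, h0, map_zero] at hunit
  exact not_isUnit_zero hunit

lemma isMThick_of_isMDense [FiniteDimensional k V] (ρ : Representation k G V) {m : ℕ}
    (hm : m ≤ finrank k V) (h : IsMDense ρ m) : IsMThick ρ m := by
  intro V₁ V₂ h1 h2
  by_contra! hno
  have hrank : finrank k (V ⧸ V₂) = m := by
    have := V₂.finrank_quotient_add_finrank
    omega
  let b := finBasisOfFinrankEq k (V ⧸ V₂) hrank
  let c := finBasisOfFinrankEq k V₁ h1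
  let v : Fin m → V := fun i => c i
  have hv : LinearIndependent k v := c.linearIndependent.map' V₁.subtype V₁.ker_subtype
  let orbit : G → ExteriorAlgebra k V := fun g => ExteriorAlgebra.ιMulti k m (ρ g ∘ v)
  have hzero : ∀ g, quotFunctional b (orbit g) = 0 := by
    intro g
    by_contra hne
    rw [quotFunctional_ιMulti] at hne
    exact hno g (isCompl_of_det_ne_zero_s5 b _ (fun i => ⟨v i, (c i).2, rfl⟩)
      ((Submodule.finrank_map_le _ _).trans h1.le) hne)
  have hfull : Submodule.span k (Set.range orbit) = ⋀[k]^m V := by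
    refine (h.2 _ ?_ ?_).resolve_left ?_
    · rw [Submodule.span_le]
      rintro _ ⟨g, rfl⟩
      exact (exteriorPower.ιMulti k m (ρ g ∘ v)).2
    · intro g
      rw [Submodule.map_span_le]
      rintro _ ⟨g', rfl⟩
      refine Submodule.subset_span ⟨g * g', ?_⟩
      simp only [orbit, AlgHom.toLinearMap_apply, ExteriorAlgebra.map_apply_ιMulti]
      congr 1
      ext i
      simp
    · intro hbot
      have hmem : orbit 1 ∈ Submodule.span k (Set.range orbit) := Submodule.subset_span ⟨1, rfl⟩
      rw [hbot, Submodule.mem_bot] at hmem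
      refine ιMulti_ne_zero_of_linearIndependent hv ?_
      have h1v : ρ 1 ∘ v = v := by
        ext i
        simp
      simpa only [orbit, h1v] using hmem
  have hker : ⋀[k]^m V ≤ LinearMap.ker (quotFunctional b) := by
    rw [← hfull, Submodule.span_le]
    rintro _ ⟨g, rfl⟩
    exact hzero g
  -- Lifting the basis `b` to `V` gives a wedge product on which the functional equals `1`.
  choose u hu using fun i => V₂.mkQ_surjective (b i)
  have hval := hker (exteriorPower.ιMulti k m u).2
  rw [LinearMap.mem_ker, exteriorPower.ιMulti_apply_coe, quotFunctional_ιMulti,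
    show V₂.mkQ ∘ u = b from funext hu, b.det_self] at hval
  exact one_ne_zero hval

lemma repIrreducible_of_isThick [FiniteDimensional k V] (ρ : Representation k G V)
    (hdim : 1 ≤ finrank k V) (h : IsThick ρ) : RepIrreducible ρ := by
  have : Nontrivial V := finrank_pos_iff.1 hdim
  refine ⟨exists_ne 0, fun W hW => ?_⟩
  by_contra! hcon
  obtain ⟨hbot, htop⟩ := hcon
  obtain ⟨w, hwW, hw0⟩ := W.exists_mem_ne_zero_of_ne_bot hbot
  obtain ⟨f, hf0, hWf⟩ := W.exists_le_ker_of_lt_top htop.lt_top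
  have hWpos : finrank k W ≠ 0 := fun h0 => hbot (Submodule.finrank_eq_zero.1 h0)
  have hWlt := Submodule.finrank_lt htop
  have hker := Module.Dual.finrank_ker_add_one_of_ne_zero hf0
  obtain ⟨g, hg⟩ := h 1 one_pos (by omega) (Submodule.span k {w}) (LinearMap.ker f)
    (finrank_span_singleton hw0) (by omega)
  have hmem : ρ g w ∈ (Submodule.span k {w}).map (ρ g) :=
    ⟨w, Submodule.mem_span_singleton_self w, rfl⟩
  have hgw : ρ g w = 0 :=
    Submodule.disjoint_def.1 hg.disjoint _ hmem (hWf (hW g ⟨w, hwW, rfl⟩))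
  apply hw0
  rw [← ρ.inv_self_apply g w, hgw, map_zero]

/-- For a finite-dimensional representation `V` with `dim V ≥ 1`: dense implies thick,
and thick implies irreducible. -/
theorem dense_implies_thick_implies_irreducible [FiniteDimensional k V]
    (ρ : Representation k G V) (hdim : 1 ≤ finrank k V) :
    (IsDense ρ → IsThick ρ) ∧ (IsThick ρ → RepIrreducible ρ) :=
  ⟨fun h m h0 hm => isMThick_of_isMDense ρ hm.le (h m h0 hm), repIrreducible_of_isThick ρ hdim⟩
end

section
/- Let V be a finite-dimensional representation of a group G over a field k with 1 ≤ dim V ≤ 3. Then the following are equivalent: V is dense; V is thick; V is irreducible. -/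
/-!
Each of density and thickness is compared with irreducibility; when `dim V = 1` all three hold,
density and thickness because their conditions range over an empty set of `m`.

For thickness: if a line `V₁` and a hyperplane `V₂` violate `1`-thickness, then the span of the
`G`-orbit of `V₁` is a proper nonzero invariant subspace contained in `V₂`; conversely a line inside,
and a hyperplane around, a proper nonzero invariant subspace violate `1`-thickness. Moreover
`m`-thickness is equivalent to `(dim V - m)`-thickness (replace `g` by `g⁻¹`), and for `dim V ≤ 3`
every `0 < m < dim V` is `1` or `dim V - 1`.

For density: `⋀^1 V` is `V`, so `1`-density is irreducibility. What remains is `m = 2` in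
dimension `3`. There the wedge product `V × ⋀^2 V → ⋀^3 V ≅ k` is an equivariant perfect pairing,
so for an invariant `W ≤ ⋀^2 V` the subspace `U = {v | v ∧ W = 0}` is invariant. If `U = V`, then
`W = 0` by nondegeneracy; if `U = 0`, then `V` embeds into `Hom(W, ⋀^3 V)`, so `dim W ≥ 3` and
`W = ⋀^2 V`.
-/

open Module

variable {k G V : Type*} [Field k] [Group G] [AddCommGroup V] [Module k V]

namespace ThickDense

/-! ### Thickness -/

lemma rep_inv_apply (ρ : Representation k G V) (g : G) (v : V) : ρ g⁻¹ (ρ g v) = v := by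
  rw [← Module.End.mul_apply, ← map_mul]; simp

lemma rep_apply_inv (ρ : Representation k G V) (g : G) (v : V) : ρ g (ρ g⁻¹ v) = v := by
  rw [← Module.End.mul_apply, ← map_mul]; simp

lemma rep_injective (ρ : Representation k G V) (g : G) : Function.Injective (ρ g) :=
  Function.LeftInverse.injective (rep_inv_apply ρ g)

lemma finrank_map_rep (ρ : Representation k G V) (g : G) (W : Submodule k V) :
    finrank k (W.map (ρ g)) = finrank k W :=
  (Submodule.equivMapOfInjective (ρ g) (rep_injective ρ g) W).finrank_eq.symm

/-- Transporting a complement by `ρ g⁻¹`. -/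
lemma isCompl_map_inv [FiniteDimensional k V] (ρ : Representation k G V) (g : G)
    (A B : Submodule k V) (h : IsCompl (A.map (ρ g)) B) : IsCompl (B.map (ρ g⁻¹)) A := by
  refine IsCompl.symm ⟨?_, ?_⟩
  · rw [Submodule.disjoint_def]
    rintro x hxA ⟨b, hb, rfl⟩
    have h0 := Submodule.disjoint_def.1 h.disjoint b
      ⟨ρ g⁻¹ b, hxA, rep_apply_inv ρ g b⟩ hb
    simp [h0]
  · rw [codisjoint_iff, eq_top_iff]
    intro x _
    have hx : ρ g x ∈ A.map (ρ g) ⊔ B := by rw [h.sup_eq_top]; trivial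
    obtain ⟨_, ⟨a, ha, rfl⟩, b, hb, hab⟩ := Submodule.mem_sup.1 hx
    refine Submodule.mem_sup.2 ⟨a, ha, ρ g⁻¹ b, ⟨b, hb, rfl⟩, ?_⟩
    rw [← rep_inv_apply ρ g x, ← hab, map_add, rep_inv_apply]

lemma IsMThick.compl [FiniteDimensional k V] {ρ : Representation k G V} {m : ℕ}
    (hm : m ≤ finrank k V) (h : IsMThick ρ m) : IsMThick ρ (finrank k V - m) := by
  intro A B hA hB
  obtain ⟨g, hg⟩ := h B A (by omega) hA
  exact ⟨g⁻¹, isCompl_map_inv ρ g B A hg⟩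

lemma isMThick_one_of_irreducible [FiniteDimensional k V] {ρ : Representation k G V}
    (h1 : 1 ≤ finrank k V) (h : RepIrreducible ρ) : IsMThick ρ 1 := by
  intro A B hA hB
  by_contra! hne
  -- A line that is not complementary to a hyperplane is contained in it.
  have hle : ∀ g, A.map (ρ g) ≤ B := by
    intro g
    by_contra hnot
    have hr := finrank_map_rep ρ g A
    have hlt : finrank k (A.map (ρ g) ⊓ B : Submodule k V) < finrank k (A.map (ρ g)) :=
      Submodule.finrank_lt_finrank_of_lt (lt_of_le_of_ne inf_le_left fun he => hnot (inf_eq_left.1 he))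
    have hinf : A.map (ρ g) ⊓ B = ⊥ := Submodule.finrank_eq_zero.1 (by omega)
    refine hne g ⟨disjoint_iff.2 hinf, codisjoint_iff.2 ?_⟩
    apply Submodule.eq_top_of_finrank_eq
    have := Submodule.finrank_sup_add_finrank_inf_eq (A.map (ρ g)) B
    rw [hinf, finrank_bot] at this
    omega
  have hsup : (⨆ g, A.map (ρ g)) ≤ B := iSup_le hle
  have hA' : A ≤ ⨆ g, A.map (ρ g) := by
    refine le_trans ?_ (le_iSup _ (1 : G))
    rw [map_one]
    intro x hx
    exact ⟨x, hx, rfl⟩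
  rcases h.2 (⨆ g, A.map (ρ g)) (fun g => by
    rw [Submodule.map_iSup]
    refine iSup_le fun g' => ?_
    rw [← Submodule.map_comp, ← Module.End.mul_eq_comp, ← map_mul]
    exact le_iSup (fun g => A.map (ρ g)) (g * g')) with h0 | h0
  · rw [h0, le_bot_iff] at hA'
    rw [hA', finrank_bot] at hA
    omega
  · rw [h0, top_le_iff] at hsup
    rw [hsup, finrank_top] at hB
    omega

lemma irreducible_of_isMThick_one [FiniteDimensional k V] {ρ : Representation k G V}
    (h1 : 1 ≤ finrank k V) (h : IsMThick ρ 1) : RepIrreducible ρ := by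
  have : Nontrivial V := Module.nontrivial_of_finrank_pos (R := k) h1
  refine ⟨exists_ne 0, fun W hW => ?_⟩
  by_contra! hne
  obtain ⟨w, hw, hw0⟩ := W.ne_bot_iff.1 hne.1
  obtain ⟨f, hf0, hf⟩ := W.exists_le_ker_of_lt_top (lt_top_iff_ne_top.2 hne.2)
  have hfr : finrank k (LinearMap.ker f) = finrank k V - 1 := by
    have := Module.Dual.finrank_ker_add_one_of_ne_zero hf0
    omega
  obtain ⟨g, hg⟩ := h (k ∙ w) (LinearMap.ker f) (finrank_span_singleton hw0) hfr
  have hmem : ρ g w ∈ (k ∙ w).map (ρ g) := ⟨w, Submodule.mem_span_singleton_self w, rfl⟩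
  have h0 := Submodule.disjoint_def.1 hg.disjoint _ hmem (hf (hW g ⟨w, hw, rfl⟩))
  exact hw0 (rep_injective ρ g (by rw [h0, map_zero]))

/-! ### Density -/

lemma isMDense_one_iff {ρ : Representation k G V} : IsMDense ρ 1 ↔ RepIrreducible ρ := by
  have hinj : Function.Injective (ExteriorAlgebra.ι k : V →ₗ[k] _) :=
    ExteriorAlgebra.ι_leftInverse.injective
  have hp : ⋀[k]^1 V = LinearMap.range (ExteriorAlgebra.ι k : V →ₗ[k] _) := pow_one _
  have hmap := Submodule.map_injective_of_injective hinj
  rw [IsMDense, RepIrreducible, hp]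
  refine and_congr ?_ ⟨fun h W hW => ?_, fun h W hle hW => ?_⟩
  · rw [Ne, LinearMap.range_eq_bot, LinearMap.ext_iff]
    simp [ExteriorAlgebra.ι_eq_zero_iff]
  · rcases h (W.map (ExteriorAlgebra.ι k)) LinearMap.map_le_range (fun g => by
      rintro _ ⟨_, ⟨w, hw, rfl⟩, rfl⟩
      exact ⟨ρ g w, hW g ⟨w, hw, rfl⟩, by simp⟩) with h0 | h0
    · left
      exact hmap (by rw [h0, Submodule.map_bot])
    · right
      exact hmap (by rw [h0, Submodule.map_top])
  · have hWe := Submodule.map_comap_eq_of_le hle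
    rcases h (W.comap (ExteriorAlgebra.ι k)) (fun g => by
      rintro _ ⟨w, hw, rfl⟩
      have := hW g ⟨_, hw, rfl⟩
      simpa using this) with h0 | h0
    · left
      rw [← hWe, h0, Submodule.map_bot]
    · right
      rw [← hWe, h0, Submodule.map_top]

/-- Nondegeneracy, in the second variable, of the wedge pairing `V × ⋀^2 V → ⋀^3 V` in
dimension `3`. -/
lemma eq_zero_of_ι_mul_eq_zero [FiniteDimensional k V] (h3 : finrank k V = 3)
    (w : ExteriorAlgebra k V) (hw : w ∈ ⋀[k]^2 V)
    (h : ∀ v : V, ExteriorAlgebra.ι k v * w = 0) : w = 0 := by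
  let b : Basis (Fin 3) k V := Module.finBasisOfFinrankEq k V h3
  let e : Fin 3 → ExteriorAlgebra k V := fun i => ExteriorAlgebra.ι k (b i)
  have hsq : ∀ i, e i * e i = 0 := fun i => ExteriorAlgebra.ι_sq_zero _
  have hanti : ∀ i j, e i * e j = -(e j * e i) := fun i j =>
    eq_neg_of_add_eq_zero_left (ExteriorAlgebra.ι_add_mul_swap _ _)
  have hsq' : ∀ i x, e i * (e i * x) = 0 := fun i x => by rw [← mul_assoc, hsq, zero_mul]
  have hanti' : ∀ i j x, e i * (e j * x) = -(e j * (e i * x)) := fun i j x => by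
    rw [← mul_assoc, hanti, neg_mul, mul_assoc]
  -- The top wedge is nonzero because `b.det` sends it to `1`.
  have htop : e 0 * (e 1 * e 2) ≠ 0 := by
    intro h0
    have hι : exteriorPower.ιMulti k 3 b = 0 := by
      apply Subtype.ext
      simpa [ExteriorAlgebra.ιMulti_apply, e, Matrix.vecTail] using h0
    have hd := exteriorPower.alternatingMapLinearEquiv_apply_ιMulti b.det b
    rw [hι, map_zero, b.det_self] at hd
    exact zero_ne_one hd
  have hspan : w ∈ Submodule.span k {e 0 * e 1, e 0 * e 2, e 1 * e 2} := by
    rw [← exteriorPower.ιMulti_span_fixedDegree_of_span_eq_top k 2 V b.span_eq] at hw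
    refine Submodule.span_le.2 ?_ hw
    rintro _ ⟨f, hf, rfl⟩
    obtain ⟨i, hi⟩ := hf ⟨0, rfl⟩
    obtain ⟨j, hj⟩ := hf ⟨1, rfl⟩
    have hval : ExteriorAlgebra.ιMulti k 2 f = e i * e j := by
      simp [ExteriorAlgebra.ιMulti_apply, e, hi, hj, Matrix.vecTail]
    rw [hval]
    have h01 : e 0 * e 1 ∈ Submodule.span k {e 0 * e 1, e 0 * e 2, e 1 * e 2} :=
      Submodule.subset_span (by simp)
    have h02 : e 0 * e 2 ∈ Submodule.span k {e 0 * e 1, e 0 * e 2, e 1 * e 2} :=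
      Submodule.subset_span (by simp)
    have h12 : e 1 * e 2 ∈ Submodule.span k {e 0 * e 1, e 0 * e 2, e 1 * e 2} :=
      Submodule.subset_span (by simp)
    have h10 := hanti 1 0 ▸ Submodule.neg_mem _ h01
    have h20 := hanti 2 0 ▸ Submodule.neg_mem _ h02
    have h21 := hanti 2 1 ▸ Submodule.neg_mem _ h12
    fin_cases i <;> fin_cases j <;> first | assumption | (simp [hsq])
  obtain ⟨x, y, z, rfl⟩ := Submodule.mem_span_triple.1 hspan
  have e0 : z • (e 0 * (e 1 * e 2)) = 0 := by
    have := h (b 0)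
    change e 0 * _ = 0 at this
    simpa only [mul_add, mul_smul_comm, hsq', smul_zero, zero_add] using this
  have e1 : y • (e 0 * (e 1 * e 2)) = 0 := by
    have := h (b 1)
    change e 1 * _ = 0 at this
    simpa only [mul_add, mul_smul_comm, hsq', hanti' 1 0, mul_neg, hsq, mul_zero, neg_zero,
      smul_zero, zero_add, add_zero, smul_neg, neg_eq_zero] using this
  have e2 : x • (e 0 * (e 1 * e 2)) = 0 := by
    have := h (b 2)
    change e 2 * _ = 0 at this
    simpa only [mul_add, mul_smul_comm, hsq', hanti' 2 0, hanti 2 1, mul_neg, hsq, hanti' 2 1,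
      mul_zero, neg_zero, neg_neg, smul_zero, zero_add, add_zero, smul_neg, neg_eq_zero] using this
  rw [smul_eq_zero_iff_left htop] at e0 e1 e2
  simp [e0, e1, e2]

/-- The wedge pairing `V × W → ⋀^3 V` for a subspace `W` of `⋀^2 V`. -/
noncomputable def wedge (W : Submodule k (ExteriorAlgebra k V)) (hW : W ≤ ⋀[k]^2 V) :
    V →ₗ[k] W →ₗ[k] ⋀[k]^3 V :=
  LinearMap.mk₂ k
    (fun v w => ⟨ExteriorAlgebra.ι k v * (w : ExteriorAlgebra k V), by
      rw [ExteriorAlgebra.exteriorPower, pow_succ']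
      exact Submodule.mul_mem_mul ⟨v, rfl⟩ (hW w.2)⟩)
    (fun _ _ _ => Subtype.ext (by simp [add_mul]))
    (fun _ _ _ => Subtype.ext (by simp))
    (fun _ _ _ => Subtype.ext (by simp [mul_add]))
    (fun _ _ _ => Subtype.ext (by simp))

lemma mem_ker_wedge {W : Submodule k (ExteriorAlgebra k V)} {hW : W ≤ ⋀[k]^2 V} {v : V} :
    v ∈ LinearMap.ker (wedge W hW) ↔ ∀ w ∈ W, ExteriorAlgebra.ι k v * w = 0 := by
  rw [LinearMap.mem_ker, LinearMap.ext_iff]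
  exact ⟨fun h w hw => congrArg Subtype.val (h ⟨w, hw⟩), fun h w => Subtype.ext (h w w.2)⟩

lemma isMDense_two_of_irreducible [FiniteDimensional k V] {ρ : Representation k G V}
    (h3 : finrank k V = 3) (h : RepIrreducible ρ) : IsMDense ρ 2 := by
  have hf2 : finrank k (⋀[k]^2 V) = 3 := by rw [exteriorPower.finrank_eq, h3]; rfl
  have hf3 : finrank k (⋀[k]^3 V) = 1 := by rw [exteriorPower.finrank_eq, h3]; rfl
  refine ⟨fun h0 => ?_, fun W hle hW => ?_⟩
  · rw [h0, finrank_bot] at hf2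
    omega
  have : FiniteDimensional k W := Submodule.finiteDimensional_of_le hle
  rcases h.2 (LinearMap.ker (wedge W hle)) (fun g => by
    rintro _ ⟨v, hv, rfl⟩
    have hv' := mem_ker_wedge.1 hv
    refine mem_ker_wedge.2 fun w hw => ?_
    -- `g v ∧ w = g (v ∧ g⁻¹ w)`.
    have hw' := hv' _ (hW g⁻¹ ⟨w, hw, rfl⟩)
    have hgw : ExteriorAlgebra.map (ρ g) (ExteriorAlgebra.map (ρ g⁻¹) w) = w := by
      rw [← AlgHom.comp_apply, ExteriorAlgebra.map_comp_map, ← Module.End.mul_eq_comp, ← map_mul]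
      simp [Module.End.one_eq_id]
    have := congrArg (ExteriorAlgebra.map (ρ g)) hw'
    simpa [hgw] using this) with h0 | h0
  · right
    have hinj : Function.Injective (wedge W hle) :=
      (injective_iff_map_eq_zero (wedge W hle)).2 fun v hv =>
        (Submodule.mem_bot k).1 (h0.le (LinearMap.mem_ker.2 hv))
    have hr := LinearMap.finrank_le_finrank_of_injective hinj
    rw [Module.finrank_linearMap, hf3, h3, mul_one] at hr
    exact Submodule.eq_of_le_of_finrank_le hle (by omega)
  · left
    rw [eq_bot_iff]
    intro w hw
    exact eq_zero_of_ι_mul_eq_zero h3 w (hle hw) fun v =>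
      mem_ker_wedge.1 (h0 ▸ Submodule.mem_top : v ∈ LinearMap.ker (wedge W hle)) w hw

/-! ### Comparison with irreducibility -/

lemma irreducible_of_finrank_eq_one [FiniteDimensional k V] {ρ : Representation k G V}
    (h1 : finrank k V = 1) : RepIrreducible ρ := by
  have : Nontrivial V := Module.nontrivial_of_finrank_pos (R := k) (by omega)
  have := isSimpleModule_iff_finrank_eq_one.2 h1
  exact ⟨exists_ne 0, fun W _ => eq_bot_or_eq_top W⟩

lemma isThick_iff [FiniteDimensional k V] (ρ : Representation k G V) (h1 : 1 ≤ finrank k V)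
    (h3 : finrank k V ≤ 3) : IsThick ρ ↔ RepIrreducible ρ := by
  refine ⟨fun h => ?_, fun h m hm0 hm => ?_⟩
  · rcases h1.eq_or_lt with h1' | h1'
    · exact irreducible_of_finrank_eq_one h1'.symm
    · exact irreducible_of_isMThick_one h1 (h 1 one_pos h1')
  · have ht := isMThick_one_of_irreducible h1 h
    obtain rfl | rfl : m = 1 ∨ m = finrank k V - 1 := by omega
    · exact ht
    · exact IsMThick.compl h1 ht

lemma isDense_iff [FiniteDimensional k V] (ρ : Representation k G V) (h1 : 1 ≤ finrank k V)
    (h3 : finrank k V ≤ 3) : IsDense ρ ↔ RepIrreducible ρ := by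
  refine ⟨fun h => ?_, fun h m hm0 hm => ?_⟩
  · rcases h1.eq_or_lt with h1' | h1'
    · exact irreducible_of_finrank_eq_one h1'.symm
    · exact isMDense_one_iff.1 (h 1 one_pos h1')
  · obtain rfl | ⟨rfl, h3'⟩ : m = 1 ∨ m = 2 ∧ finrank k V = 3 := by omega
    · exact isMDense_one_iff.2 h
    · exact isMDense_two_of_irreducible h3' h

end ThickDense

/-- For a finite-dimensional representation `V` with `1 ≤ dim V ≤ 3`, the notions of
dense, thick, and irreducible coincide. -/
theorem dense_iff_thick_iff_irreducible_of_dim_le_three [FiniteDimensional k V]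
    (ρ : Representation k G V) (h1 : 1 ≤ finrank k V) (h3 : finrank k V ≤ 3) :
    (IsDense ρ ↔ IsThick ρ) ∧ (IsThick ρ ↔ RepIrreducible ρ) :=
  ⟨(ThickDense.isDense_iff ρ h1 h3).trans (ThickDense.isThick_iff ρ h1 h3).symm,
    ThickDense.isThick_iff ρ h1 h3⟩
end

section
/- For n ≥ 1, the standard representation of the special orthogonal group SO_{2n+1}(ℂ) on ℂ^{2n+1} is dense; that is, for every integer m with 0 < m < 2n+1, the induced representation of SO_{2n+1}(ℂ) on ⋀^m ℂ^{2n+1} is irreducible. -/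
open Module Matrix

/-!
Write `N = 2n + 1`. Already the group of signed permutation matrices of determinant `1` acts
irreducibly on `⋀^m ℂ^N`.

Since `N` is odd, `det (-A) = -det A`, while `-A` acts on `⋀^m` as `(-1)^m` times `A`. Hence an
`SO_N`-invariant subspace `W` of `⋀^m` is invariant under all of `O_N` (`map_mem_of_orthogonal`).
In particular `W` is stable under the coordinate reflections `e_i ↦ -e_i`, which act on a basis
vector `e_S = e_{s_1} ∧ ⋯ ∧ e_{s_m}` by `-1` if `i ∈ S` and by `1` otherwise. The operators
`1 ± (reflection)` therefore compose to a nonzero multiple of the projection onto the line of any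
given `e_S` (`exists_isolating_map`), so a nonzero `W` contains some `e_S`. The permutation matrices
carry this `e_S` to every other basis vector, whence `W = ⋀^m`.
-/

/-- Scaling a linear map by `c` scales its action on the `m`-th exterior power by `c ^ m`. -/
lemma map_smul_of_mem_exteriorPower {V : Type*} [AddCommGroup V] [Module ℂ V] (m : ℕ) (c : ℂ)
    (f : V →ₗ[ℂ] V) {w : ExteriorAlgebra ℂ V} (hw : w ∈ ⋀[ℂ]^m V) :
    ExteriorAlgebra.map (c • f) w = c ^ m • ExteriorAlgebra.map f w := by
  rw [← ExteriorAlgebra.ιMulti_span_fixedDegree] at hw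
  induction hw using Submodule.span_induction with
  | mem x hx =>
    obtain ⟨v, rfl⟩ := hx
    rw [ExteriorAlgebra.map_apply_ιMulti, ExteriorAlgebra.map_apply_ιMulti]
    have := (ExteriorAlgebra.ιMulti ℂ m (M := V)).toMultilinearMap.map_smul_univ
      (fun _ => c) (f ∘ v)
    simpa [Function.comp_def] using this
  | zero => simp
  | add x y _ _ hx hy => rw [map_add, map_add, hx, hy, smul_add]
  | smul a x _ hx => rw [map_smul, map_smul, hx, smul_comm]

/-- In odd dimension, a subspace of an exterior power that is invariant under the special
orthogonal group is invariant under the full orthogonal group. -/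
lemma map_mem_of_orthogonal {N m : ℕ} (hN : Odd N)
    {W : Submodule ℂ (ExteriorAlgebra ℂ (Fin N → ℂ))} (hWm : W ≤ ⋀[ℂ]^m (Fin N → ℂ))
    (hW : ∀ A : Matrix (Fin N) (Fin N) ℂ, Aᵀ * A = 1 → A.det = 1 →
      W.map (ExteriorAlgebra.map A.mulVecLin).toLinearMap ≤ W)
    (A : Matrix (Fin N) (Fin N) ℂ) (hA : Aᵀ * A = 1)
    {w : ExteriorAlgebra ℂ (Fin N → ℂ)} (hw : w ∈ W) :
    ExteriorAlgebra.map A.mulVecLin w ∈ W := by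
  have hdet : A.det * A.det = 1 := by
    have := congrArg Matrix.det hA
    rwa [Matrix.det_mul, Matrix.det_transpose, Matrix.det_one] at this
  rcases mul_self_eq_one_iff.mp hdet with h | h
  · exact hW A hA h (Submodule.mem_map_of_mem hw)
  · have h1 : ExteriorAlgebra.map (-A).mulVecLin w ∈ W :=
      hW (-A) (by simpa using hA) (by simp [Matrix.det_neg, hN.neg_one_pow, h])
        (Submodule.mem_map_of_mem hw)
    have h2 : A.mulVecLin = (-1 : ℂ) • (-A).mulVecLin := by
      ext; simp
    rw [h2, map_smul_of_mem_exteriorPower m _ _ (hWm hw)]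
    exact W.smul_mem _ h1

/-- The matrix of the reflection `e_i ↦ -e_i` fixing the other basis vectors. -/
noncomputable def coordReflection {N : ℕ} (i : Fin N) : Matrix (Fin N) (Fin N) ℂ :=
  Matrix.diagonal fun j => if j = i then -1 else 1

lemma coordReflection_orthogonal {N : ℕ} (i : Fin N) :
    (coordReflection i)ᵀ * coordReflection i = 1 := by
  rw [coordReflection, Matrix.diagonal_transpose, Matrix.diagonal_mul_diagonal,
    ← Matrix.diagonal_one]
  congr 1
  ext j
  split_ifs <;> simp

/-- The basis vector `e_S` of `⋀^m ℂ^N` attached to an `m`-element subset `S`. -/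
noncomputable abbrev wedgeBasis {N : ℕ} (m : ℕ) (s : Set.powersetCard (Fin N) m) :
    ExteriorAlgebra ℂ (Fin N → ℂ) :=
  ExteriorAlgebra.ιMulti_family ℂ m (Pi.basisFun ℂ (Fin N)) s

open Classical in
lemma map_coordReflection_wedgeBasis {N m : ℕ} (i : Fin N) (s : Set.powersetCard (Fin N) m) :
    ExteriorAlgebra.map (coordReflection i).mulVecLin (wedgeBasis m s) =
      (if i ∈ s then (-1 : ℂ) else 1) • wedgeBasis m s := by
  rw [wedgeBasis, ExteriorAlgebra.ιMulti_family, ExteriorAlgebra.map_apply_ιMulti]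
  set f := Set.powersetCard.ofFinEmbEquiv.symm s with hf
  have h1 : ((coordReflection i).mulVecLin ∘ (Pi.basisFun ℂ (Fin N)) ∘ f) =
      fun k => (if f k = i then (-1 : ℂ) else 1) • ((Pi.basisFun ℂ (Fin N)) ∘ f) k := by
    funext k
    ext j
    by_cases hj : j = f k
    · subst hj
      simp [coordReflection, Matrix.mulVec_diagonal]
    · simp [coordReflection, Matrix.mulVec_diagonal, hj]
  have h2 := (ExteriorAlgebra.ιMulti ℂ m (M := Fin N → ℂ)).toMultilinearMap.map_smul_univ
      (fun k => if f k = i then (-1 : ℂ) else 1) ((Pi.basisFun ℂ (Fin N)) ∘ f)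
  rw [h1]
  refine h2.trans ?_
  congr 1
  by_cases hi : i ∈ s
  · obtain ⟨k, hk⟩ := (Set.powersetCard.mem_range_ofFinEmbEquiv_symm_iff_mem s i).mpr hi
    rw [if_pos hi, Finset.prod_eq_single k]
    · rw [if_pos hk]
    · intro l _ hl
      rw [if_neg]
      intro h
      exact hl (f.injective (h.trans hk.symm))
    · simp
  · rw [if_neg hi]
    refine Finset.prod_eq_one fun k _ => if_neg fun h => hi ?_
    exact (Set.powersetCard.mem_range_ofFinEmbEquiv_symm_iff_mem s i).mp ⟨k, h⟩

/-- A composite of operators `1 ± (reflection)` over the coordinates in `t` preserves `W`, and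
annihilates each basis vector `e_S` unless `S` and `S₀` agree on `t`, when it scales it by a
fixed nonzero scalar. -/
lemma exists_isolating_map {N m : ℕ} {W : Submodule ℂ (ExteriorAlgebra ℂ (Fin N → ℂ))}
    (hW : ∀ A : Matrix (Fin N) (Fin N) ℂ, Aᵀ * A = 1 → ∀ w ∈ W,
      ExteriorAlgebra.map A.mulVecLin w ∈ W)
    (s₀ : Set.powersetCard (Fin N) m) (t : Finset (Fin N)) :
    ∃ (P : ExteriorAlgebra ℂ (Fin N → ℂ) →ₗ[ℂ] ExteriorAlgebra ℂ (Fin N → ℂ)) (c : ℂ), c ≠ 0 ∧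
      (∀ w ∈ W, P w ∈ W) ∧
      (∀ s : Set.powersetCard (Fin N) m, (∀ i ∈ t, (i ∈ s ↔ i ∈ s₀)) →
        P (wedgeBasis m s) = c • wedgeBasis m s) ∧
      ∀ s : Set.powersetCard (Fin N) m, ¬ (∀ i ∈ t, (i ∈ s ↔ i ∈ s₀)) →
        P (wedgeBasis m s) = 0 := by
  classical
  induction t using Finset.induction_on with
  | empty => exact ⟨LinearMap.id, 1, one_ne_zero, fun w hw => hw, by simp, by simp⟩
  | insert i t _ ih =>
    obtain ⟨P, c, hc, hPW, hP1, hP0⟩ := ih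
    -- `ε` is the eigenvalue of the `i`-th reflection on `e_{S₀}`.
    set ε : ℂ := if i ∈ s₀ then -1 else 1 with hε
    have key : ∀ s : Set.powersetCard (Fin N) m,
        (LinearMap.id + ε • (ExteriorAlgebra.map (coordReflection i).mulVecLin).toLinearMap :
          ExteriorAlgebra ℂ (Fin N → ℂ) →ₗ[ℂ] ExteriorAlgebra ℂ (Fin N → ℂ)) (wedgeBasis m s) =
          (if (i ∈ s ↔ i ∈ s₀) then (2 : ℂ) else 0) • wedgeBasis m s := by
      intro s
      rw [LinearMap.add_apply, LinearMap.smul_apply, AlgHom.toLinearMap_apply,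
        map_coordReflection_wedgeBasis, LinearMap.id_apply, smul_smul]
      nth_rewrite 1 [← one_smul ℂ (wedgeBasis m s)]
      rw [← add_smul]
      congr 1
      by_cases h1 : i ∈ s <;> by_cases h2 : i ∈ s₀ <;> simp [hε, h1, h2] <;> norm_num
    refine ⟨P ∘ₗ (LinearMap.id +
      ε • (ExteriorAlgebra.map (coordReflection i).mulVecLin).toLinearMap), 2 * c,
      mul_ne_zero two_ne_zero hc, ?_, ?_, ?_⟩
    · intro w hw
      exact hPW _ (W.add_mem hw
        (W.smul_mem _ (hW _ (coordReflection_orthogonal i) w hw)))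
    · intro s hs
      rw [LinearMap.comp_apply, key, if_pos (hs i (Finset.mem_insert_self _ _)), map_smul,
        hP1 s (fun j hj => hs j (Finset.mem_insert_of_mem hj)), smul_smul]
    · intro s hs
      rw [LinearMap.comp_apply, key, map_smul]
      by_cases hi : (i ∈ s ↔ i ∈ s₀)
      · rw [hP0 s, smul_zero]
        intro h
        apply hs
        intro j hj
        rcases Finset.mem_insert.mp hj with rfl | hj
        · exact hi
        · exact h j hj
      · rw [if_neg hi, zero_smul]

lemma span_wedgeBasis (N m : ℕ) :
    Submodule.span ℂ (Set.range (wedgeBasis (N := N) m)) = ⋀[ℂ]^m (Fin N → ℂ) :=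
  exteriorPower.ιMulti_family_span_fixedDegree_of_span ℂ (Pi.basisFun ℂ (Fin N)).span_eq

/-- Permutation matrices are transitive on the `e_S`: the orthogonal group carries any basis
vector of `⋀^m` to any other one. -/
lemma exists_orthogonal_map_wedgeBasis {N m : ℕ} (s t : Set.powersetCard (Fin N) m) :
    ∃ A : Matrix (Fin N) (Fin N) ℂ, Aᵀ * A = 1 ∧
      ExteriorAlgebra.map A.mulVecLin (wedgeBasis m s) = wedgeBasis m t := by
  obtain ⟨σ, hσ⟩ := Equiv.Perm.exists_extending_pair
    (Set.powersetCard.ofFinEmbEquiv.symm s) (Set.powersetCard.ofFinEmbEquiv.symm t)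
    (Set.powersetCard.ofFinEmbEquiv.symm s).injective
    (Set.powersetCard.ofFinEmbEquiv.symm t).injective
  -- `permMatrix τ` sends `e_j` to `e_{τ⁻¹ j}`, hence the inverse.
  refine ⟨(σ⁻¹).permMatrix ℂ, ?_, ?_⟩
  · rw [Matrix.transpose_permMatrix, ← Matrix.permMatrix_mul]
    simp
  · rw [wedgeBasis, ExteriorAlgebra.ιMulti_family, ExteriorAlgebra.map_apply_ιMulti]
    congr 1
    funext k
    ext j
    simp [← hσ k, Pi.single_apply, Equiv.Perm.inv_def,
      Equiv.symm_apply_eq]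

/-- For `n ≥ 1`, the standard representation of `SO_{2n+1}(ℂ)` (complex matrices `A` with
`AᵀA = 1` and `det A = 1`) on `ℂ^{2n+1}` is dense: for every `0 < m < 2n+1`, the induced
representation on `⋀^m ℂ^{2n+1}` is irreducible. -/
theorem soOddC_standard_dense (n : ℕ) (hn : 1 ≤ n) (m : ℕ) (h0 : 0 < m) (hm : m < 2 * n + 1) :
    ⋀[ℂ]^m (Fin (2 * n + 1) → ℂ) ≠ ⊥ ∧
    ∀ W : Submodule ℂ (ExteriorAlgebra ℂ (Fin (2 * n + 1) → ℂ)),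
      W ≤ ⋀[ℂ]^m (Fin (2 * n + 1) → ℂ) →
      (∀ A : Matrix (Fin (2 * n + 1)) (Fin (2 * n + 1)) ℂ, Aᵀ * A = 1 → A.det = 1 →
        W.map (ExteriorAlgebra.map A.mulVecLin).toLinearMap ≤ W) →
      W = ⊥ ∨ W = ⋀[ℂ]^m (Fin (2 * n + 1) → ℂ) := by
  constructor
  · intro h
    have h1 := exteriorPower.finrank_eq ℂ m (M := Fin (2 * n + 1) → ℂ)
    rw [h, finrank_bot, Module.finrank_fin_fun] at h1
    exact (Nat.choose_pos hm.le).ne h1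
  · intro W hWm hSO
    have hW : ∀ A : Matrix (Fin (2 * n + 1)) (Fin (2 * n + 1)) ℂ, Aᵀ * A = 1 → ∀ w ∈ W,
        ExteriorAlgebra.map A.mulVecLin w ∈ W :=
      fun A hA w hw => map_mem_of_orthogonal ⟨n, rfl⟩ hWm hSO A hA hw
    refine or_iff_not_imp_left.mpr fun hne => ?_
    obtain ⟨w, hw, hw0⟩ := Submodule.exists_mem_ne_zero_of_ne_bot hne
    have hwspan := hWm hw
    rw [← span_wedgeBasis] at hwspan
    obtain ⟨a, rfl⟩ := (Submodule.mem_span_range_iff_exists_fun ℂ).mp hwspan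
    obtain ⟨s₀, -, hs₀⟩ := Finset.exists_ne_zero_of_sum_ne_zero hw0
    obtain ⟨P, c, hc, hPW, hP1, hP0⟩ := exists_isolating_map hW s₀ Finset.univ
    have hPw := hPW _ hw
    rw [map_sum, Finset.sum_eq_single s₀, map_smul, hP1 s₀ (fun i _ => Iff.rfl), smul_smul]
      at hPw
    rotate_left
    · intro s _ hs
      rw [map_smul, hP0 s, smul_zero]
      intro h
      exact hs (Subtype.ext (Finset.ext fun i => h i (Finset.mem_univ i)))
    · simp
    have ha : a s₀ * c ≠ 0 := mul_ne_zero (left_ne_zero_of_smul hs₀) hc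
    have hmem : wedgeBasis m s₀ ∈ W := (W.smul_mem_iff ha).mp hPw
    refine le_antisymm hWm ?_
    rw [← span_wedgeBasis, Submodule.span_le]
    rintro _ ⟨t, rfl⟩
    obtain ⟨A, hA, hAt⟩ := exists_orthogonal_map_wedgeBasis s₀ t
    rw [← hAt]
    exact hW A hA _ hmem
end

section
/- For n ≥ 2, the standard representation of the special orthogonal group SO_{2n}(ℂ) on ℂ^{2n} is m-dense for every integer m with 0 < m < 2n and m ≠ n; that is, the induced representation of SO_{2n}(ℂ) on ⋀^m ℂ^{2n} is irreducible for each such m. -/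
open Module Matrix

/-!
The signed permutation matrices of determinant `1` already act irreducibly on `⋀^m ℂ^N`
(`N = 2n`) when `0 < m < N` and `m ≠ n`.

Let `e_S`, for `S` an `m`-element subset of the index set, be the standard basis of `⋀^m ℂ^N`.
The diagonal matrix with entries `-1` at two indices `i ≠ j` and `1` elsewhere lies in the special
orthogonal group and multiplies `e_S` by `(-1)^{|S ∩ {i, j}|}`. Two `m`-sets `S ≠ T` are told
apart by such a matrix, with `i` in the symmetric difference of `S` and `T` and `j` outside it;
such a `j` exists because otherwise `T` would be the complement of `S`, forcing `2m = N`
(`exists_flip_separating`). So the `e_S` are common eigenvectors with distinct characters, and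
every nonzero invariant subspace contains some `e_S` (`exists_basis_mem`). Finally, the group
permutes the `e_S` transitively: a permutation carrying `S` to `T` in order is corrected to
determinant `1` by a sign at an index outside `S` (`exists_signedPerm`).
-/

open Set.powersetCard

/-- The standard basis of the `m`-th exterior power of `ℂ^N`, indexed by `m`-element subsets. -/
noncomputable abbrev extBasis (N m : ℕ) :
    Basis (Set.powersetCard (Fin N) m) ℂ (⋀[ℂ]^m (Fin N → ℂ)) :=
  (Pi.basisFun ℂ (Fin N)).exteriorPower m

/-- The sign vector with entry `-1` at `i` and at `j`, and `1` elsewhere (for `i ≠ j`). -/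
noncomputable def flip₂ {N : ℕ} (i j : Fin N) (k : Fin N) : ℂ :=
  (if k = i then -1 else 1) * (if k = j then -1 else 1)

lemma prod_flip₂ {N : ℕ} (i j : Fin N) (S : Finset (Fin N)) :
    ∏ k ∈ S, flip₂ i j k = (if i ∈ S then -1 else 1) * (if j ∈ S then -1 else 1) := by
  unfold flip₂
  rw [Finset.prod_mul_distrib, Finset.prod_ite_eq', Finset.prod_ite_eq']

lemma flip₂_mul_self {N : ℕ} (i j k : Fin N) : flip₂ i j k * flip₂ i j k = 1 := by
  unfold flip₂
  split_ifs <;> norm_num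

lemma map_diagonal_extBasis {N m : ℕ} (d : Fin N → ℂ) (S : Set.powersetCard (Fin N) m) :
    exteriorPower.map m (diagonal d).mulVecLin (extBasis N m S) =
      (∏ k ∈ S.1, d k) • extBasis N m S := by
  rw [exteriorPower.basis_apply, exteriorPower.map_apply_ιMulti_family]
  unfold exteriorPower.ιMulti_family
  have h1 : ((diagonal d).mulVecLin ∘ (Pi.basisFun ℂ (Fin N))) ∘ (ofFinEmbEquiv.symm S) =
      fun k => d (ofFinEmbEquiv.symm S k) •
        ((Pi.basisFun ℂ (Fin N)) ∘ (ofFinEmbEquiv.symm S)) k := by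
    funext k
    ext l
    by_cases h : l = ofFinEmbEquiv.symm S k
    · simp [h]
    · simp [h]
  have h2 : ∏ k ∈ S.1, d k = ∏ k : Fin m, d (ofFinEmbEquiv.symm S k) := by
    rw [ofFinEmbEquiv_symm_apply, ← Finset.prod_coe_sort,
      ← (S.1.orderIsoOfFin S.2).toEquiv.prod_comp]
    rfl
  rw [h2, ← AlternatingMap.map_smul_univ, ← h1]

lemma repr_map_diagonal {N m : ℕ} (d : Fin N → ℂ) (x : ⋀[ℂ]^m (Fin N → ℂ))
    (S : Set.powersetCard (Fin N) m) :
    (extBasis N m).repr (exteriorPower.map m (diagonal d).mulVecLin x) S =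
      (∏ k ∈ S.1, d k) * (extBasis N m).repr x S := by
  have : (extBasis N m).coord S ∘ₗ exteriorPower.map m (diagonal d).mulVecLin =
      (∏ k ∈ S.1, d k) • (extBasis N m).coord S := by
    refine (extBasis N m).ext fun T => ?_
    rw [LinearMap.comp_apply, map_diagonal_extBasis]
    by_cases h : T = S
    · subst h; simp
    · simp [h]
  simpa using LinearMap.congr_fun this x

/-- Distinct `m`-subsets of a `2n`-set are separated by a pair of sign flips unless they are
complementary, which `m ≠ n` excludes. -/
lemma exists_flip_separating {n m : ℕ} (hmn : m ≠ n) {S T : Set.powersetCard (Fin (2 * n)) m}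
    (hST : S ≠ T) : ∃ i j : Fin (2 * n), i ≠ j ∧
      (∏ k ∈ S.1, flip₂ i j k) * (∏ k ∈ T.1, flip₂ i j k) = -1 := by
  obtain ⟨i, hi⟩ : ∃ i, ¬ (i ∈ S.1 ↔ i ∈ T.1) := by
    by_contra! h
    exact hST (Subtype.ext (Finset.ext h))
  obtain ⟨j, hj⟩ : ∃ j, (j ∈ S.1 ↔ j ∈ T.1) := by
    by_contra! h
    have hc : T.1 = S.1ᶜ := by
      ext k
      have := h k
      rw [Finset.mem_compl]
      tauto
    have h1 : T.1.card = m := T.2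
    have h2 : S.1.card = m := S.2
    rw [hc, Finset.card_compl, Fintype.card_fin, h2] at h1
    omega
  refine ⟨i, j, fun h => hi (h ▸ hj), ?_⟩
  rw [prod_flip₂, prod_flip₂]
  by_cases h1 : i ∈ S.1 <;> by_cases h2 : i ∈ T.1 <;> by_cases h3 : j ∈ S.1 <;>
    by_cases h4 : j ∈ T.1 <;> simp_all

/-- A nonzero subspace stable under all double sign flips contains a standard basis vector.
Adding to `x` a signed flip of `x` kills one unwanted coordinate and doubles the chosen one. -/
lemma exists_basis_mem {n m : ℕ} (hmn : m ≠ n) (W : Submodule ℂ (⋀[ℂ]^m (Fin (2 * n) → ℂ)))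
    (hW : ∀ i j : Fin (2 * n), i ≠ j → ∀ x ∈ W,
      exteriorPower.map m (diagonal (flip₂ i j)).mulVecLin x ∈ W) (hne : W ≠ ⊥) :
    ∃ S, extBasis (2 * n) m S ∈ W := by
  classical
  set E := extBasis (2 * n) m with hE
  obtain ⟨w, hwW, hw0⟩ := W.ne_bot_iff.mp hne
  obtain ⟨S, hS⟩ : ∃ S, E.repr w S ≠ 0 := by
    by_contra! h
    exact hw0 (E.repr.map_eq_zero_iff.mp (Finsupp.ext h))
  have key : ∀ F : Finset (Set.powersetCard (Fin (2 * n)) m), S ∉ F →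
      ∃ x ∈ W, E.repr x S ≠ 0 ∧ ∀ T ∈ F, E.repr x T = 0 := by
    intro F
    induction F using Finset.induction_on with
    | empty => exact fun _ => ⟨w, hwW, hS, by simp⟩
    | insert T F _ ih =>
      intro hSF
      rw [Finset.mem_insert, not_or] at hSF
      obtain ⟨x, hxW, hxS, hxF⟩ := ih hSF.2
      obtain ⟨i, j, hij, hsep⟩ := exists_flip_separating hmn hSF.1
      have hsq : (∏ k ∈ S.1, flip₂ i j k) * (∏ k ∈ S.1, flip₂ i j k) = 1 := by
        rw [← Finset.prod_mul_distrib]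
        exact Finset.prod_eq_one fun k _ => flip₂_mul_self i j k
      have hc : ∀ U, E.repr (x + (∏ k ∈ S.1, flip₂ i j k) •
          exteriorPower.map m (diagonal (flip₂ i j)).mulVecLin x) U =
          (1 + (∏ k ∈ S.1, flip₂ i j k) * (∏ k ∈ U.1, flip₂ i j k)) * E.repr x U := by
        intro U
        rw [map_add, map_smul, Finsupp.add_apply, Finsupp.smul_apply, hE, repr_map_diagonal,
          smul_eq_mul]
        ring
      refine ⟨_, W.add_mem hxW (W.smul_mem (∏ k ∈ S.1, flip₂ i j k) (hW i j hij x hxW)), ?_, ?_⟩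
      · rw [hc, hsq]
        exact mul_ne_zero (by norm_num) hxS
      · intro U hU
        rw [hc]
        rcases Finset.mem_insert.mp hU with rfl | hU
        · rw [hsep]; simp
        · rw [hxF U hU, mul_zero]
  obtain ⟨x, hxW, hxS, hx⟩ := key (Finset.univ.erase S) (by simp)
  refine ⟨S, ?_⟩
  have hxE : x = E.repr x S • E S := by
    apply E.repr.injective
    ext T
    by_cases h : T = S
    · subst h; simp
    · rw [hx T (by simp [h])]
      simp [h]
  rw [hxE] at hxW
  exact (W.smul_mem_iff hxS).mp hxW

/-- The special orthogonal group acts transitively on the standard basis of `⋀^m ℂ^N`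
for `m < N`. -/
lemma exists_signedPerm {N m : ℕ} (hm : m < N) (S T : Set.powersetCard (Fin N) m) :
    ∃ A : Matrix (Fin N) (Fin N) ℂ, Aᵀ * A = 1 ∧ A.det = 1 ∧
      exteriorPower.map m A.mulVecLin (extBasis N m S) = extBasis N m T := by
  classical
  obtain ⟨σ, hσ⟩ := Equiv.Perm.exists_extending_pair (ofFinEmbEquiv.symm S)
    (ofFinEmbEquiv.symm T) (ofFinEmbEquiv.symm S).injective (ofFinEmbEquiv.symm T).injective
  obtain ⟨j, hj⟩ : ∃ j, j ∉ S.1 := by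
    by_contra! h
    have h1 : S.1.card = m := S.2
    rw [Finset.eq_univ_of_forall h, Finset.card_univ, Fintype.card_fin] at h1
    omega
  -- the sign at `j ∉ S` corrects the determinant without affecting `e_S`
  let s : ℂ := ((Equiv.Perm.sign σ : ℤ) : ℂ)
  have hs : s * s = 1 := by
    simp only [s]
    rw [← Int.cast_mul, Int.units_coe_mul_self, Int.cast_one]
  let d : Fin N → ℂ := fun k => if k = j then s else 1
  have hd : ∀ k, d k * d k = 1 := fun k => by
    simp only [d]; split_ifs <;> simp [hs]
  have hP : ((σ⁻¹).permMatrix ℂ)ᵀ * (σ⁻¹).permMatrix ℂ = 1 := by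
    rw [Matrix.transpose_permMatrix, ← Matrix.permMatrix_mul]
    simp
  refine ⟨(σ⁻¹).permMatrix ℂ * diagonal d, ?_, ?_, ?_⟩
  · rw [Matrix.transpose_mul, Matrix.mul_assoc, ← Matrix.mul_assoc _ _ (diagonal d), hP,
      Matrix.one_mul, diagonal_transpose, diagonal_mul_diagonal]
    simp [hd]
  · rw [det_mul, det_permutation, det_diagonal, Equiv.Perm.sign_inv]
    simp only [d, Finset.prod_ite_eq', Finset.mem_univ, if_true]
    exact hs
  · rw [exteriorPower.basis_apply, exteriorPower.basis_apply,
      exteriorPower.map_apply_ιMulti_family]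
    unfold exteriorPower.ιMulti_family
    congr 1
    funext k
    have hk : ofFinEmbEquiv.symm S k ≠ j := by
      intro h
      apply hj
      rw [← h, ofFinEmbEquiv_symm_apply]
      exact Finset.orderEmbOfFin_mem S.1 S.2 k
    have hdk : diagonal d *ᵥ Pi.single (ofFinEmbEquiv.symm S k) 1 =
        Pi.single (ofFinEmbEquiv.symm S k) 1 := by
      simp [d, hk]
    simp only [Function.comp_apply, Pi.basisFun_apply, mulVecLin_apply]
    rw [← mulVec_mulVec, hdk, Matrix.permMatrix_mulVec, ← hσ]
    ext l
    simp [Pi.single_apply, Equiv.symm_apply_eq]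



/-- For `n ≥ 2`, the standard representation of `SO_{2n}(ℂ)` (complex matrices `A` with
`AᵀA = 1` and `det A = 1`) on `ℂ^{2n}` is `m`-dense for every `0 < m < 2n` with `m ≠ n`:
the induced representation on `⋀^m ℂ^{2n}` is irreducible for each such `m`. -/
theorem soEvenC_standard_mDense (n : ℕ) (hn : 2 ≤ n) (m : ℕ) (h0 : 0 < m) (hm : m < 2 * n)
    (hmn : m ≠ n) :
    ⋀[ℂ]^m (Fin (2 * n) → ℂ) ≠ ⊥ ∧
    ∀ W : Submodule ℂ (ExteriorAlgebra ℂ (Fin (2 * n) → ℂ)),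
      W ≤ ⋀[ℂ]^m (Fin (2 * n) → ℂ) →
      (∀ A : Matrix (Fin (2 * n)) (Fin (2 * n)) ℂ, Aᵀ * A = 1 → A.det = 1 →
        W.map (ExteriorAlgebra.map A.mulVecLin).toLinearMap ≤ W) →
      W = ⊥ ∨ W = ⋀[ℂ]^m (Fin (2 * n) → ℂ) := by
  have hne : Nonempty (Set.powersetCard (Fin (2 * n)) m) := by
    obtain ⟨S, -, hS⟩ := Finset.exists_subset_card_eq (s := (Finset.univ : Finset (Fin (2 * n))))
      (n := m) (by simpa using hm.le)
    exact ⟨⟨S, hS⟩⟩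
  refine ⟨fun h => ?_, fun W hWle hW => ?_⟩
  · obtain ⟨S⟩ := hne
    apply (extBasis (2 * n) m).ne_zero S
    have := (extBasis (2 * n) m S).2
    exact Subtype.ext ((Submodule.mem_bot ℂ).mp (h.le this))
  · set W' : Submodule ℂ (⋀[ℂ]^m (Fin (2 * n) → ℂ)) := W.comap (Submodule.subtype _) with hW'
    have hinv : ∀ A : Matrix (Fin (2 * n)) (Fin (2 * n)) ℂ, Aᵀ * A = 1 → A.det = 1 →
        ∀ x ∈ W', exteriorPower.map m A.mulVecLin x ∈ W' := by
      intro A h1 h2 x hx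
      have hcoe : ((exteriorPower.map m A.mulVecLin x : ⋀[ℂ]^m (Fin (2 * n) → ℂ)) :
          ExteriorAlgebra ℂ (Fin (2 * n) → ℂ)) = ExteriorAlgebra.map A.mulVecLin x := by
        have : Submodule.subtype _ ∘ₗ exteriorPower.map m A.mulVecLin =
            (ExteriorAlgebra.map A.mulVecLin).toLinearMap ∘ₗ
              Submodule.subtype (⋀[ℂ]^m (Fin (2 * n) → ℂ)) := by
          apply exteriorPower.linearMap_ext
          ext v
          simp [ExteriorAlgebra.map_apply_ιMulti, exteriorPower.map_apply_ιMulti]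
        exact LinearMap.congr_fun this x
      rw [hW', Submodule.mem_comap, Submodule.subtype_apply, hcoe]
      exact hW A h1 h2 (Submodule.mem_map_of_mem hx)
    by_cases hbot : W' = ⊥
    · left
      rw [eq_bot_iff]
      intro x hx
      have : (⟨x, hWle hx⟩ : ⋀[ℂ]^m (Fin (2 * n) → ℂ)) ∈ W' := hx
      rw [hbot, Submodule.mem_bot] at this
      exact congrArg Subtype.val this
    · right
      refine le_antisymm hWle ?_
      obtain ⟨S, hS⟩ := exists_basis_mem hmn W' (fun i j hij x hx => by
        refine hinv _ ?_ ?_ x hx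
        · rw [diagonal_transpose, diagonal_mul_diagonal]
          simp [flip₂_mul_self]
        · rw [det_diagonal, prod_flip₂]
          simp) hbot
      have htop : W' = ⊤ := by
        rw [eq_top_iff, ← (extBasis (2 * n) m).span_eq, Submodule.span_le]
        rintro _ ⟨T, rfl⟩
        obtain ⟨A, h1, h2, h3⟩ := exists_signedPerm hm S T
        exact h3 ▸ hinv A h1 h2 _ hS
      intro x hx
      have : (⟨x, hx⟩ : ⋀[ℂ]^m (Fin (2 * n) → ℂ)) ∈ W' := htop ▸ Submodule.mem_top
      exact this
end

section
/- For n ≥ 2, the standard representation of the special orthogonal group SO_{2n}(ℂ) on ℂ^{2n} is not n-thick. -/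
/-!
Let `L` be a maximal isotropic subspace of `ℂ^{2n}`. The key fact (`det_of_disjoint`) is that an
orthogonal `A` with `A L ∩ L = 0` has `det A = (-1)^n`: the two families of maximal isotropic
subspaces are swapped exactly by the orthogonal maps of determinant `-1`. In a hyperbolic basis
adapted to `L`, the map `A` has block matrix `(a b; c d)` preserving `J = (0 1; 1 0)`, and the
intersection being zero means that `c` is invertible. Clearing `a` by a unipotent row operation
leaves `(0 (cᵀ)⁻¹; c d)`, whose determinant is `(-1)^n` (`det_of_lowerLeft`).

Now take `R` orthogonal with `det R = (-1)^(n+1)`, `V₁ = L` and `V₂ = R L`. If `A V₁` and `V₂` were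
complementary for some `A` in the special orthogonal group, then `Rᵀ A` would be orthogonal of
determinant `(-1)^(n+1)` with `(Rᵀ A) L ∩ L = 0`, a contradiction.
-/

open Module Matrix

/-- The Gram matrix `(0 1; 1 0)` of the split quadratic form on `ℂⁿ ⊕ ℂⁿ`. -/
def hypJ (n : ℕ) : Matrix (Fin n ⊕ Fin n) (Fin n ⊕ Fin n) ℂ := fromBlocks 0 1 1 0

/-- A block matrix preserving the split form `(0 1; 1 0)`, with invertible lower left block, has
determinant `(-1)^n`, where `n` is the size of the blocks. -/
lemma det_of_lowerLeft {n : ℕ} (a b c d : Matrix (Fin n) (Fin n) ℂ)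
    (hJ : (fromBlocks a b c d)ᵀ * hypJ n * fromBlocks a b c d = hypJ n)
    (hc : IsUnit c.det) : (fromBlocks a b c d).det = (-1) ^ n := by
  simp only [hypJ, fromBlocks_transpose, fromBlocks_multiply, fromBlocks_inj, mul_zero, mul_one,
    zero_add, add_zero] at hJ
  obtain ⟨h11, h12, -, -⟩ := hJ
  have hct : IsUnit cᵀ.det := by rwa [det_transpose]
  -- `a c⁻¹` is skew-symmetric because the image of the first summand is isotropic.
  have hskew : cᵀ⁻¹ * aᵀ = -(a * c⁻¹) := by
    have h : cᵀ⁻¹ * (cᵀ * a + aᵀ * c) * c⁻¹ = 0 := by rw [h11]; simp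
    rw [mul_add, add_mul, nonsing_inv_mul_cancel_left _ _ hct, ← mul_assoc,
      mul_nonsing_inv_cancel_right _ _ hc] at h
    exact eq_neg_of_add_eq_zero_right h
  have hb : b - a * c⁻¹ * d = cᵀ⁻¹ := by
    have h : cᵀ⁻¹ * (cᵀ * b + aᵀ * d) = cᵀ⁻¹ := by rw [h12]; simp
    rw [mul_add, nonsing_inv_mul_cancel_left _ _ hct, ← mul_assoc, hskew] at h
    rw [← h]; simp [sub_eq_add_neg]
  have hswap : fromBlocks 1 (-(a * c⁻¹)) 0 1 * fromBlocks a b c d * hypJ n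
      = fromBlocks cᵀ⁻¹ 0 d c := by
    simp only [hypJ, fromBlocks_multiply, fromBlocks_inj, mul_zero, mul_one, zero_mul, one_mul,
      zero_add, add_zero, and_true, neg_mul, nonsing_inv_mul_cancel_right _ _ hc, add_neg_cancel]
    rw [← hb, sub_eq_add_neg]
  have hdet := congrArg det hswap
  have hJd : (hypJ n).det = (-1) ^ n := by
    have h : hypJ n
        = fromBlocks 1 1 0 1 * fromBlocks 1 0 (-1) 1 * fromBlocks 1 1 0 1 * fromBlocks (-1) 0 0 1 :=
      by simp [hypJ, fromBlocks_multiply]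
    rw [h]; simp [det_mul, det_neg]
  rw [det_mul, det_mul, hJd, det_fromBlocks_zero₂₁, det_fromBlocks_zero₁₂, det_nonsing_inv,
    det_transpose, Ring.inverse_mul_cancel _ hc] at hdet
  simp only [det_one, one_mul] at hdet
  rcases neg_one_pow_eq_or ℂ n with h | h <;> rw [h] at hdet ⊢
  · linear_combination hdet
  · linear_combination -hdet

/-- An orthogonal map moving `L` to a subspace that meets `L` trivially has determinant `(-1)^n`.
Here the columns of `T` form a hyperbolic basis, and `L` is the maximal isotropic subspace
spanned by the first half of them. -/
lemma det_of_disjoint {n : ℕ} (T : Matrix (Fin (2 * n)) (Fin n ⊕ Fin n) ℂ)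
    (hT : Tᵀ * T = hypJ n) (hT' : T * (hypJ n * Tᵀ) = 1)
    (A : Matrix (Fin (2 * n)) (Fin (2 * n)) ℂ) (hA : Aᵀ * A = 1)
    (L : Submodule ℂ (Fin (2 * n) → ℂ)) (hL : ∀ v, v ∈ L ↔ ∃ x, T *ᵥ Sum.elim x 0 = v)
    (hd : Disjoint (L.map A.mulVecLin) L) : A.det = (-1) ^ n := by
  have hJJ : hypJ n
      * hypJ n = 1 := by simp [hypJ, fromBlocks_multiply]
  have hT'' : (hypJ n * Tᵀ) * T = 1 := by rw [Matrix.mul_assoc, hT, hJJ]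
  obtain ⟨B, hB⟩ : ∃ B, B = (hypJ n * Tᵀ) * A * T := ⟨_, rfl⟩
  have hTB : T * B = A * T := by rw [hB, Matrix.mul_assoc _ A, ← Matrix.mul_assoc, hT', Matrix.one_mul]
  have hBdet : B.det = A.det := hB ▸ det_conj_of_mul_eq_one hT'' hT'
  have hBJ : Bᵀ * hypJ n * B = hypJ n := by
    calc Bᵀ * hypJ n * B = (T * B)ᵀ * (T * B) := by
          rw [← hT, transpose_mul]; simp only [Matrix.mul_assoc]
      _ = Tᵀ * (Aᵀ * A) * T := by rw [hTB, transpose_mul]; simp only [Matrix.mul_assoc]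
      _ = _ := by rw [hA, Matrix.mul_one, hT]
  have hBb := fromBlocks_toBlocks B
  rw [← hBdet, ← hBb]
  apply det_of_lowerLeft
  · rw [hBb, hBJ]
  rw [isUnit_iff_ne_zero]
  intro h0
  obtain ⟨x, hx, hcx⟩ := exists_mulVec_eq_zero_iff.mpr h0
  have hBx : B *ᵥ Sum.elim x 0 = Sum.elim (B.toBlocks₁₁ *ᵥ x) 0 := by
    conv_lhs => rw [← hBb]
    rw [fromBlocks_mulVec]
    simp [Function.comp_def, hcx]
    simp [← Pi.zero_def]
  have hAT : A *ᵥ (T *ᵥ Sum.elim x 0) = T *ᵥ Sum.elim (B.toBlocks₁₁ *ᵥ x) 0 := by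
    rw [mulVec_mulVec, ← hTB, ← mulVec_mulVec, hBx]
  have hz := Submodule.disjoint_def.mp hd (A *ᵥ (T *ᵥ Sum.elim x 0))
    ⟨_, (hL _).2 ⟨x, rfl⟩, rfl⟩ ((hL _).2 ⟨_, hAT.symm⟩)
  have h1 : T *ᵥ Sum.elim x 0 = 0 := by
    simpa [mulVec_mulVec, ← Matrix.mul_assoc, hA] using congrArg (Aᵀ *ᵥ ·) hz
  have h2 : Sum.elim x (0 : Fin n → ℂ) = 0 := by
    have := congrArg ((hypJ n * Tᵀ) *ᵥ ·) h1
    simpa only [mulVec_mulVec, hT'', one_mulVec, mulVec_zero] using this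
  exact hx (funext fun i => congrFun h2 (Sum.inl i))

lemma exists_hyperbolic (n : ℕ) : ∃ T : Matrix (Fin (2 * n)) (Fin n ⊕ Fin n) ℂ,
    Tᵀ * T = hypJ n ∧ T * (hypJ n * Tᵀ) = 1 := by
  let e : Fin (2 * n) ≃ Fin n ⊕ Fin n := (finCongr (two_mul n)).trans finSumFinEquiv.symm
  -- The hyperbolic pairs are `e_j + i e_{n+j}` and `(e_j - i e_{n+j}) / 2`.
  let S : Matrix (Fin n ⊕ Fin n) (Fin n ⊕ Fin n) ℂ :=
    fromBlocks 1 ((1 / 2 : ℂ) • 1) (Complex.I • 1) ((-Complex.I / 2) • 1)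
  have hS : Sᵀ * S = hypJ n := by
    simp only [S, hypJ, fromBlocks_transpose, fromBlocks_multiply, fromBlocks_inj, transpose_smul,
      transpose_one, Matrix.mul_one, ← add_smul, smul_mul_assoc, Matrix.one_mul, smul_smul]
    refine ⟨?_, ?_, ?_, ?_⟩ <;> ext i j <;> by_cases h : i = j <;> simp [h, one_apply] <;>
      ring_nf <;> simp <;> norm_num
  have hS' : S * (hypJ n * Sᵀ) = 1 := by
    rw [mul_eq_one_comm, Matrix.mul_assoc, hS]
    simp [hypJ, fromBlocks_multiply]
  refine ⟨S.submatrix e id, ?_, ?_⟩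
  · rw [transpose_submatrix, submatrix_mul_equiv, hS, submatrix_id_id]
  · have : hypJ n * (S.submatrix e id)ᵀ
        = (hypJ n * Sᵀ).submatrix id e := by
      rw [transpose_submatrix]; ext i j; simp [mul_apply]
    rw [this]
    have h2 : S.submatrix e id * (hypJ n * Sᵀ).submatrix id e
      = (S * (hypJ n * Sᵀ)).submatrix e e := by
      ext i j; simp [mul_apply]
    rw [h2, hS', submatrix_one_equiv]

lemma exists_orthogonal_det (n : ℕ) (hn : 2 ≤ n) :
    ∃ R : Matrix (Fin (2 * n)) (Fin (2 * n)) ℂ, Rᵀ * R = 1 ∧ R.det = (-1) ^ (n + 1) := by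
  refine ⟨diagonal (Function.update 1 ⟨0, by omega⟩ ((-1) ^ (n + 1))), ?_, ?_⟩
  · rw [diagonal_transpose, diagonal_mul_diagonal, ← diagonal_one]
    congr 1
    ext i
    by_cases h : i = ⟨0, by omega⟩
    · subst h; simp [← mul_pow]
    · simp [Function.update_of_ne h]
  · rw [det_diagonal, Finset.prod_update_of_mem (Finset.mem_univ _)]
    simp

/-- For `n ≥ 2`, the standard representation of `SO_{2n}(ℂ)` (complex matrices `A` with
`AᵀA = 1` and `det A = 1`) on `ℂ^{2n}` is not `n`-thick: it is not the case that for all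
subspaces `V₁, V₂` with `dim V₁ = n` and `dim V₂ = 2n - n` some element of `SO_{2n}(ℂ)`
moves `V₁` to a complement of `V₂`. -/
theorem soEvenC_standard_not_nThick (n : ℕ) (hn : 2 ≤ n) :
    ¬ ∀ V₁ V₂ : Submodule ℂ (Fin (2 * n) → ℂ),
        finrank ℂ V₁ = n → finrank ℂ V₂ = 2 * n - n →
        ∃ A : Matrix (Fin (2 * n)) (Fin (2 * n)) ℂ, Aᵀ * A = 1 ∧ A.det = 1 ∧
          IsCompl (V₁.map A.mulVecLin) V₂ := by
  intro H
  obtain ⟨T, hT, hT'⟩ := exists_hyperbolic n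
  obtain ⟨R, hR, hRdet⟩ := exists_orthogonal_det n hn
  let f : (Fin n → ℂ) →ₗ[ℂ] (Fin (2 * n) → ℂ) :=
    (T * (fromRows 1 0 : Matrix (Fin n ⊕ Fin n) (Fin n) ℂ)).mulVecLin
  have hf : ∀ x, f x = T *ᵥ Sum.elim x 0 := fun x => by
    simp only [f]
    rw [mulVecLin_apply, ← mulVec_mulVec, fromRows_mulVec, one_mulVec, zero_mulVec]
  have hTinj : Function.Injective (T *ᵥ ·) := by
    apply Function.LeftInverse.injective (g := ((hypJ n * Tᵀ) *ᵥ ·))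
    intro x
    simp only [mulVec_mulVec, Matrix.mul_assoc, hT]
    simp [hypJ, fromBlocks_multiply]
  have hfinj : Function.Injective f := fun x y hxy => by
    rw [hf, hf] at hxy
    exact funext fun i => congrFun (hTinj hxy) (Sum.inl i)
  have hRinj : Function.Injective R.mulVecLin := by
    apply Function.LeftInverse.injective (g := (Rᵀ *ᵥ ·))
    intro x
    simp [mulVec_mulVec, hR]
  have hrank : finrank ℂ (LinearMap.range f) = n := by
    rw [LinearMap.finrank_range_of_inj hfinj]; simp
  obtain ⟨A, hA, hAdet, hc⟩ := H (LinearMap.range f) ((LinearMap.range f).map R.mulVecLin) hrank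
    (by rw [← (Submodule.equivMapOfInjective _ hRinj _).finrank_eq, hrank]; omega)
  have hRR : R * Rᵀ = 1 := mul_eq_one_comm.mp hR
  have key := det_of_disjoint T hT hT' (Rᵀ * A)
    (by rw [transpose_mul, transpose_transpose, Matrix.mul_assoc, ← Matrix.mul_assoc R, hRR,
      Matrix.one_mul, hA])
    (LinearMap.range f) (fun v => by simp [hf]) (by
      rw [Submodule.disjoint_def]
      rintro _ ⟨u, hu, rfl⟩ hv
      have h0 := Submodule.disjoint_def.mp hc.disjoint (A *ᵥ u) ⟨u, hu, rfl⟩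
        ⟨_, hv, by
          rw [mulVecLin_apply, mulVecLin_apply, mulVec_mulVec, ← Matrix.mul_assoc, hRR,
            Matrix.one_mul]⟩
      rw [mulVecLin_apply, ← mulVec_mulVec, h0, mulVec_zero])
  rw [det_mul, det_transpose, hRdet, hAdet, pow_succ] at key
  rcases neg_one_pow_eq_or ℂ n with h | h <;> rw [h] at key <;> norm_num at key
end

section
/- For n ≥ 1, the standard representation of the symplectic group Sp_{2n}(ℂ) on ℂ^{2n} is thick; that is, it is m-thick for every integer m with 0 < m < 2n. -/
open Module Matrix

/-!
The proof moves `V₁` by symplectic transvections `x ↦ x + ω(v, x) v`, each of which strictly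
lowers `dim (V₁ ∩ V₂)`. If `0 ≠ u ∈ V₁ ∩ V₂`, then `V₁ + V₂` is a proper subspace for dimension
reasons, and `{v | ω(v, u) = 0}` is a proper subspace because `ω` is nondegenerate; as a vector
space is not the union of two proper subspaces, some `v ∉ V₁ + V₂` has `ω(v, u) ≠ 0`.
If `x ∈ V₁` and `x + ω(v, x) v ∈ V₂`, then `ω(v, x) v ∈ V₁ + V₂`, hence `ω(v, x) = 0`. So the
transvection along `v` makes the intersection `{x ∈ V₁ ∩ V₂ | ω(v, x) = 0}`, which omits `u`
(`exists_transvection_finrank_lt`). When the intersection is zero, the dimensions force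
complementarity.
-/

namespace SpThick

variable {n : ℕ}

/-- The symplectic transvection `x ↦ x + ω(v, x) v`, where `ω(v, x) = vᵀ J x`. -/
noncomputable def transvection (v : Fin n ⊕ Fin n → ℂ) :
    Matrix (Fin n ⊕ Fin n) (Fin n ⊕ Fin n) ℂ :=
  1 + vecMulVec v (v ᵥ* J (Fin n) ℂ)

lemma transvection_mulVec (v x : Fin n ⊕ Fin n → ℂ) :
    transvection v *ᵥ x = x + (v ⬝ᵥ J (Fin n) ℂ *ᵥ x) • v := by
  rw [transvection, add_mulVec, one_mulVec, vecMulVec_mulVec, dotProduct_mulVec]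
  simp

lemma J_mulVec_eq_neg_vecMul (v : Fin n ⊕ Fin n → ℂ) :
    J (Fin n) ℂ *ᵥ v = -(v ᵥ* J (Fin n) ℂ) := by
  rw [← mulVec_transpose, J_transpose, neg_mulVec, neg_neg]

lemma dotProduct_J_self (v : Fin n ⊕ Fin n → ℂ) : v ⬝ᵥ J (Fin n) ℂ *ᵥ v = 0 := by
  have h : v ⬝ᵥ J (Fin n) ℂ *ᵥ v = -(v ⬝ᵥ J (Fin n) ℂ *ᵥ v) := by
    conv_lhs => rw [J_mulVec_eq_neg_vecMul, dotProduct_neg, dotProduct_comm,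
      ← dotProduct_mulVec]
  exact self_eq_neg.mp h

lemma transvection_symplectic (v : Fin n ⊕ Fin n → ℂ) :
    (transvection v)ᵀ * J (Fin n) ℂ * transvection v = J (Fin n) ℂ := by
  have h0 := dotProduct_J_self v
  rw [dotProduct_mulVec] at h0
  simp only [transvection, transpose_add, transpose_one, transpose_vecMulVec, add_mul, mul_add,
    one_mul, mul_one, vecMulVec_mul, mul_vecMulVec,
    J_mulVec_eq_neg_vecMul, vecMulVec_mulVec, h0]
  simp [neg_vecMulVec]

lemma exists_dotProduct_J_ne_zero {u : Fin n ⊕ Fin n → ℂ} (hu : u ≠ 0) :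
    ∃ v, v ⬝ᵥ J (Fin n) ℂ *ᵥ u ≠ 0 := by
  by_contra! h
  have h1 : J (Fin n) ℂ *ᵥ u = 0 := dotProduct_eq_zero _ fun w => by
    rw [dotProduct_comm]; exact h w
  have h2 : J (Fin n) ℂ *ᵥ (J (Fin n) ℂ *ᵥ u) = 0 := by rw [h1, mulVec_zero]
  rw [mulVec_mulVec, J_squared, neg_mulVec, one_mulVec, neg_eq_zero] at h2
  exact hu h2

/-- A proper subspace `S` and the proper subspace `{v | ω(v, u) = 0}` do not cover `ℂ^{2n}`. -/
lemma exists_notMem_and_dotProduct_J_ne_zero {u : Fin n ⊕ Fin n → ℂ} (hu : u ≠ 0)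
    {S : Submodule ℂ (Fin n ⊕ Fin n → ℂ)} (hS : S ≠ ⊤) :
    ∃ v, v ∉ S ∧ v ⬝ᵥ J (Fin n) ℂ *ᵥ u ≠ 0 := by
  obtain ⟨a, ha⟩ := exists_dotProduct_J_ne_zero hu
  obtain ⟨b, hb⟩ : ∃ b, b ∉ S := by
    by_contra! h
    exact hS (eq_top_iff.mpr fun x _ => h x)
  by_cases haS : a ∈ S
  · by_cases hb0 : b ⬝ᵥ J (Fin n) ℂ *ᵥ u = 0
    · exact ⟨a + b, fun h => hb ((S.add_mem_iff_right haS).mp h), by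
        rwa [add_dotProduct, hb0, add_zero]⟩
    · exact ⟨b, hb, hb0⟩
  · exact ⟨a, haS, ha⟩

lemma exists_transvection_finrank_lt {V₁ V₂ : Submodule ℂ (Fin n ⊕ Fin n → ℂ)}
    (hne : V₁ ⊓ V₂ ≠ ⊥) (hsup : V₁ ⊔ V₂ ≠ ⊤) :
    ∃ v, finrank ℂ ↥(V₁.map (transvection v).mulVecLin ⊓ V₂) < finrank ℂ ↥(V₁ ⊓ V₂) := by
  obtain ⟨u, hu, hu0⟩ := Submodule.exists_mem_ne_zero_of_ne_bot hne
  obtain ⟨v, hv, hvu⟩ := exists_notMem_and_dotProduct_J_ne_zero hu0 hsup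
  have key : ∀ y ∈ V₁.map (transvection v).mulVecLin ⊓ V₂,
      y ∈ V₁ ⊓ V₂ ∧ v ⬝ᵥ J (Fin n) ℂ *ᵥ y = 0 := by
    rintro y ⟨⟨x, hx, rfl⟩, hy⟩
    simp only [SetLike.mem_coe, mulVecLin_apply, transvection_mulVec] at hx hy ⊢
    have hc : v ⬝ᵥ J (Fin n) ℂ *ᵥ x = 0 := by
      by_contra hc
      refine hv ((Submodule.smul_mem_iff _ hc).mp ?_)
      rw [← add_sub_cancel_left x (_ • v)]
      exact sub_mem (Submodule.mem_sup_right hy) (Submodule.mem_sup_left hx)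
    rw [hc, zero_smul, add_zero] at hy ⊢
    exact ⟨⟨hx, hy⟩, hc⟩
  refine ⟨v, Submodule.finrank_lt_finrank_of_lt (lt_of_le_of_ne (fun y hy => (key y hy).1) ?_)⟩
  intro h
  exact hvu (key u (h ▸ hu)).2

lemma finrank_map_of_symplectic {A : Matrix (Fin n ⊕ Fin n) (Fin n ⊕ Fin n) ℂ}
    (hA : Aᵀ * J (Fin n) ℂ * A = J (Fin n) ℂ) (V : Submodule ℂ (Fin n ⊕ Fin n → ℂ)) :
    finrank ℂ ↥(V.map A.mulVecLin) = finrank ℂ V := by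
  have hU : IsUnit A := (isUnit_iff_isUnit_det A).mpr
    (SymplecticGroup.symplectic_det (SymplecticGroup.mem_iff'.mpr hA))
  exact (Submodule.equivMapOfInjective A.mulVecLin
    (mulVec_injective_iff_isUnit.mpr hU) V).finrank_eq.symm

/-- Thickness for subspaces of complementary dimension, by induction on a bound `k` for the
dimension of their intersection. -/
lemma exists_symplectic_isCompl (k : ℕ) (V₁ V₂ : Submodule ℂ (Fin n ⊕ Fin n → ℂ))
    (hd : finrank ℂ V₁ + finrank ℂ V₂ = 2 * n) (hk : finrank ℂ ↥(V₁ ⊓ V₂) ≤ k) :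
    ∃ A : Matrix (Fin n ⊕ Fin n) (Fin n ⊕ Fin n) ℂ,
      Aᵀ * J (Fin n) ℂ * A = J (Fin n) ℂ ∧ IsCompl (V₁.map A.mulVecLin) V₂ := by
  have hdim : finrank ℂ (Fin n ⊕ Fin n → ℂ) = 2 * n := by simp [two_mul]
  have hsi := Submodule.finrank_sup_add_finrank_inf_eq V₁ V₂
  induction k generalizing V₁ with
  | zero =>
    refine ⟨1, by simp, ?_⟩
    rw [mulVecLin_one, Submodule.map_id]
    refine ⟨disjoint_iff.mpr (Submodule.finrank_eq_zero.mp (by omega)),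
      codisjoint_iff.mpr (Submodule.eq_top_of_finrank_eq (by omega))⟩
  | succ k ih =>
    by_cases h0 : V₁ ⊓ V₂ = ⊥
    · exact ih V₁ hd (by rw [h0, finrank_bot]; exact Nat.zero_le k) hsi
    · have hpos : finrank ℂ ↥(V₁ ⊓ V₂) ≠ 0 := fun h => h0 (Submodule.finrank_eq_zero.mp h)
      have hsup : V₁ ⊔ V₂ ≠ ⊤ := by
        intro h
        rw [h, finrank_top] at hsi
        omega
      obtain ⟨v, hv⟩ := exists_transvection_finrank_lt h0 hsup
      have hT := transvection_symplectic v
      obtain ⟨A, hA, hc⟩ := ih (V₁.map (transvection v).mulVecLin)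
        (by rw [finrank_map_of_symplectic hT, hd]) (by omega)
        (Submodule.finrank_sup_add_finrank_inf_eq _ _)
      refine ⟨A * transvection v, ?_, ?_⟩
      · calc (A * transvection v)ᵀ * J (Fin n) ℂ * (A * transvection v)
            = (transvection v)ᵀ * (Aᵀ * J (Fin n) ℂ * A) * transvection v := by
              simp only [transpose_mul, Matrix.mul_assoc]
          _ = J (Fin n) ℂ := by rw [hA, hT]
      · rwa [mulVecLin_mul, Submodule.map_comp]

end SpThick

/-- For `n ≥ 1`, the standard representation of the symplectic group `Sp_{2n}(ℂ)`
(matrices `A` with `AᵀJA = J` where `J = [[0, -I_n], [I_n, 0]]`) on `ℂ^{2n}` is thick: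
for every `0 < m < 2n` and all subspaces `V₁, V₂` with `dim V₁ = m`, `dim V₂ = 2n - m`,
some symplectic matrix moves `V₁` to a complement of `V₂`. -/
theorem spC_standard_thick (n : ℕ) (hn : 1 ≤ n) (m : ℕ) (h0 : 0 < m) (hm : m < 2 * n)
    (V₁ V₂ : Submodule ℂ (Fin n ⊕ Fin n → ℂ))
    (h₁ : finrank ℂ V₁ = m) (h₂ : finrank ℂ V₂ = 2 * n - m) :
    ∃ A : Matrix (Fin n ⊕ Fin n) (Fin n ⊕ Fin n) ℂ,
      Aᵀ * Matrix.fromBlocks 0 (-1) 1 0 * A = Matrix.fromBlocks 0 (-1) 1 0 ∧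
      IsCompl (V₁.map A.mulVecLin) V₂ :=
  SpThick.exists_symplectic_isCompl _ V₁ V₂ (by omega) le_rfl
end

section
/- For n ≥ 2, the standard representation of the symplectic group Sp_{2n}(ℂ) on ℂ^{2n} is not m-dense for any integer m with 1 < m < 2n−1; that is, the induced representation of Sp_{2n}(ℂ) on ⋀^m ℂ^{2n} is not irreducible for each such m. -/
open Module Matrix

/-!
Let `e` be the standard basis of `V = ℂ^{2n}` and `ω = ∑ᵢ eᵢ ∧ eₙ₊ᵢ ∈ ⋀² V` the bivector dual to
the symplectic form. It is fixed by every symplectic matrix (`map_omega`), so `x ↦ ω ∧ x` is an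
equivariant map `⋀^k V → ⋀^{k+2} V`, which is nonzero as soon as `k + 2 ≤ 2n`
(`exists_omega_mul_ne_zero`).

* If `m ≤ n`, the image of `⋀^{m-2} V` in `⋀^m V` is invariant and nonzero, and it is proper
  because `C(2n, m-2) < C(2n, m)`.
* If `m > n`, the kernel of `ω ∧ ·` on `⋀^m V` is invariant and proper, and it is nonzero
  because `C(2n, m+2) < C(2n, m)`.
-/

namespace SpNotDense

/-- The bivector `∑ᵢ eᵢ ∧ eₙ₊ᵢ` of the standard symplectic basis, as an element of the exterior
algebra. -/
noncomputable def omega (n : ℕ) : ExteriorAlgebra ℂ (Fin n ⊕ Fin n → ℂ) :=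
  ∑ i : Fin n, ExteriorAlgebra.ι ℂ (Pi.single (Sum.inl i) 1) *
    ExteriorAlgebra.ι ℂ (Pi.single (Sum.inr i) 1)

/-- The bivector `∑ M a b • e_a ∧ e_b` attached to a matrix `M`. -/
noncomputable def bivector {I : Type*} [Fintype I] [DecidableEq I] (M : Matrix I I ℂ) :
    ExteriorAlgebra ℂ (I → ℂ) :=
  ∑ a, ∑ b, M a b • (ExteriorAlgebra.ι ℂ (Pi.single a 1) * ExteriorAlgebra.ι ℂ (Pi.single b 1))

/-- A linear substitution `A` acts on bivectors by the congruence `M ↦ A M Aᵀ`. -/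
lemma map_bivector {I : Type*} [Fintype I] [DecidableEq I] (A M : Matrix I I ℂ) :
    ExteriorAlgebra.map A.mulVecLin (bivector M) = bivector (A * M * Aᵀ) := by
  have hcol : ∀ a, ExteriorAlgebra.map A.mulVecLin (ExteriorAlgebra.ι ℂ (Pi.single a 1)) =
      ∑ c, A c a • ExteriorAlgebra.ι ℂ (Pi.single c (1 : ℂ)) := by
    intro a
    rw [ExteriorAlgebra.map_apply_ι]
    have : A.mulVecLin (Pi.single a 1) = ∑ c, A c a • (Pi.single c (1 : ℂ) : I → ℂ) := by
      ext d
      simp [Finset.sum_apply, Pi.single_apply]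
    rw [this, map_sum]
    simp only [map_smul]
  simp only [bivector, map_sum, map_smul, map_mul, hcol, Finset.sum_mul, Finset.mul_sum,
    Finset.smul_sum, smul_mul_assoc, mul_smul_comm, smul_smul, Matrix.mul_apply,
    Matrix.transpose_apply, Finset.sum_smul]
  have h := Finset.sum_comm (s := (Finset.univ : Finset (I × I)))
    (t := (Finset.univ : Finset (I × I)))
    (f := fun p q => (A q.1 p.2 * M p.2 p.1 * A q.2 p.1) •
      (ExteriorAlgebra.ι ℂ (Pi.single q.1 1 : I → ℂ) *
        ExteriorAlgebra.ι ℂ (Pi.single q.2 1 : I → ℂ)))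
  simp only [Fintype.sum_prod_type] at h
  rw [← h, Finset.sum_comm]
  refine Finset.sum_congr rfl fun b _ => Finset.sum_congr rfl fun a _ => ?_
  rw [Finset.sum_comm]
  refine Finset.sum_congr rfl fun c _ => Finset.sum_congr rfl fun d _ => ?_
  congr 1
  ring

lemma bivector_J (n : ℕ) :
    bivector (Matrix.fromBlocks 0 (-1) 1 0 : Matrix (Fin n ⊕ Fin n) (Fin n ⊕ Fin n) ℂ) =
      (-2 : ℂ) • omega n := by
  have hswap : ∀ i : Fin n,
      ExteriorAlgebra.ι ℂ (Pi.single (Sum.inr i) (1 : ℂ) : Fin n ⊕ Fin n → ℂ) *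
        ExteriorAlgebra.ι ℂ (Pi.single (Sum.inl i) 1) =
      -(ExteriorAlgebra.ι ℂ (Pi.single (Sum.inl i) (1 : ℂ)) *
        ExteriorAlgebra.ι ℂ (Pi.single (Sum.inr i) 1)) := fun i =>
    eq_neg_of_add_eq_zero_left (ExteriorAlgebra.ι_add_mul_swap _ _)
  simp [bivector, omega, Fintype.sum_sum_type, Matrix.one_apply, hswap, ite_smul]
  module

lemma map_omega {n : ℕ} {A : Matrix (Fin n ⊕ Fin n) (Fin n ⊕ Fin n) ℂ}
    (hA : Aᵀ * Matrix.fromBlocks 0 (-1) 1 0 * A = Matrix.fromBlocks 0 (-1) 1 0) :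
    ExteriorAlgebra.map A.mulVecLin (omega n) = omega n := by
  have hA' : A * Matrix.fromBlocks 0 (-1) 1 0 * Aᵀ = Matrix.fromBlocks 0 (-1) 1 0 :=
    SymplecticGroup.mem_iff.1 (SymplecticGroup.mem_iff'.2 hA)
  have h := map_bivector A (Matrix.fromBlocks 0 (-1) 1 0)
  rw [hA', bivector_J, map_smul] at h
  exact smul_right_injective _ (by norm_num : (-2 : ℂ) ≠ 0) h

lemma omega_mem (n : ℕ) : omega n ∈ ⋀[ℂ]^2 (Fin n ⊕ Fin n → ℂ) := by
  refine Submodule.sum_mem _ fun i _ => ?_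
  rw [ExteriorAlgebra.exteriorPower, pow_two]
  exact Submodule.mul_mem_mul ⟨_, rfl⟩ ⟨_, rfl⟩

lemma omega_mul_mem {n k : ℕ} {x : ExteriorAlgebra ℂ (Fin n ⊕ Fin n → ℂ)}
    (hx : x ∈ ⋀[ℂ]^k (Fin n ⊕ Fin n → ℂ)) :
    omega n * x ∈ ⋀[ℂ]^(k + 2) (Fin n ⊕ Fin n → ℂ) := by
  rw [ExteriorAlgebra.exteriorPower, add_comm k 2, pow_add]
  exact Submodule.mul_mem_mul (omega_mem n) hx

lemma map_mem {n k : ℕ} (f : (Fin n ⊕ Fin n → ℂ) →ₗ[ℂ] (Fin n ⊕ Fin n → ℂ))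
    {x : ExteriorAlgebra ℂ (Fin n ⊕ Fin n → ℂ)} (hx : x ∈ ⋀[ℂ]^k (Fin n ⊕ Fin n → ℂ)) :
    ExteriorAlgebra.map f x ∈ ⋀[ℂ]^k (Fin n ⊕ Fin n → ℂ) := by
  have h : (⋀[ℂ]^k (Fin n ⊕ Fin n → ℂ)).map (ExteriorAlgebra.map f).toLinearMap ≤
      ⋀[ℂ]^k (Fin n ⊕ Fin n → ℂ) := by
    rw [ExteriorAlgebra.exteriorPower, Submodule.map_pow, ExteriorAlgebra.ι_range_map_map]
    exact pow_le_pow_left' (LinearMap.map_le_range ..) _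
  exact h ⟨x, hx, rfl⟩

/-- The witness `x` is a product of `k` basis vectors other than the pair `e₀, eₙ`; the coordinate
of `ω ∧ x` along `e₀ ∧ eₙ ∧ x` is then `1`, since only the term `i = 0` of `ω` contributes. -/
lemma exists_omega_mul_ne_zero {n k : ℕ} (hn : 0 < n) (hk : k + 2 ≤ 2 * n) :
    ∃ x ∈ ⋀[ℂ]^k (Fin n ⊕ Fin n → ℂ), omega n * x ≠ 0 := by
  let z : Fin n := ⟨0, hn⟩
  obtain ⟨s⟩ : Nonempty (Fin k ↪
      {a : Fin n ⊕ Fin n // a ∉ ({Sum.inl z, Sum.inr z} : Finset (Fin n ⊕ Fin n))}) := by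
    apply Function.Embedding.nonempty_of_card_le
    rw [Fintype.card_subtype_compl, Fintype.card_coe, Finset.card_pair (by simp)]
    simp only [Fintype.card_fin, Fintype.card_sum]
    omega
  have hs : ∀ j, (s j : Fin n ⊕ Fin n) ≠ Sum.inl z ∧ (s j : Fin n ⊕ Fin n) ≠ Sum.inr z := by
    intro j
    simpa using (s j).2
  let e : Fin n ⊕ Fin n → (Fin n ⊕ Fin n → ℂ) := fun a => Pi.single a 1
  -- the index sequence of the monomial `eᵢ ∧ eₙ₊ᵢ ∧ x`
  let g : Fin n → Fin (k + 2) → Fin n ⊕ Fin n := fun i =>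
    Matrix.vecCons (Sum.inl i) (Matrix.vecCons (Sum.inr i) fun j => (s j : Fin n ⊕ Fin n))
  have hg : Function.Injective (g z) := by
    intro a b
    refine Fin.cases ?_ (fun a => ?_) a <;> refine Fin.cases ?_ (fun b => ?_) b
    · simp
    · refine Fin.cases ?_ (fun b => ?_) b
      · simp [g]
      · simp [g, (hs b).1.symm]
    · refine Fin.cases ?_ (fun a => ?_) a
      · simp [g]
      · simp [g, (hs a).1]
    · refine Fin.cases ?_ (fun a => ?_) a <;> refine Fin.cases ?_ (fun b => ?_) b
      · simp
      · simp [g, (hs b).2.symm]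
      · simp [g, (hs a).2]
      · simp [g, Subtype.val_inj]
  let φ : Module.Dual ℂ (⋀[ℂ]^(k + 2) (Fin n ⊕ Fin n → ℂ)) :=
    exteriorPower.pairingDual ℂ _ (k + 2)
      (exteriorPower.ιMulti ℂ (k + 2) fun j => LinearMap.proj (g z j))
  have hφ : ∀ i, φ (exteriorPower.ιMulti ℂ (k + 2) (e ∘ g i)) = if i = z then 1 else 0 := by
    intro i
    simp only [φ, exteriorPower.pairingDual_ιMulti_ιMulti]
    split_ifs with hi
    · subst hi
      rw [← Matrix.det_one (n := Fin (k + 2))]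
      congr 1
      ext a b
      simp [e, Matrix.one_apply, Pi.single_apply, hg.eq_iff, eq_comm]
    -- no factor of this monomial is `e₀`, so the column of the coordinate `e₀` vanishes
    · apply Matrix.det_eq_zero_of_column_eq_zero 0
      intro a
      have : g i a ≠ Sum.inl z := by
        refine Fin.cases ?_ (fun a => ?_) a
        · simpa [g] using hi
        · refine Fin.cases ?_ (fun a => ?_) a
          · simp [g]
          · simpa [g] using (hs a).1
      have h0 : g z 0 = Sum.inl z := rfl
      simp [e, Pi.single_apply, h0, this.symm]
  refine ⟨ExteriorAlgebra.ιMulti ℂ k fun j => e (s j),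
    ExteriorAlgebra.ιMulti_range ℂ k ⟨_, rfl⟩, fun h0 => ?_⟩
  have hsum : omega n * ExteriorAlgebra.ιMulti ℂ k (fun j => e (s j)) =
      ((∑ i, exteriorPower.ιMulti ℂ (k + 2) (e ∘ g i) :
        ⋀[ℂ]^(k + 2) (Fin n ⊕ Fin n → ℂ)) : ExteriorAlgebra ℂ (Fin n ⊕ Fin n → ℂ)) := by
    rw [AddSubmonoidClass.coe_finsetSum, omega, Finset.sum_mul]
    refine Finset.sum_congr rfl fun i _ => ?_
    rw [exteriorPower.ιMulti_apply_coe, ExteriorAlgebra.ιMulti_succ_apply,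
      ExteriorAlgebra.ιMulti_succ_apply, mul_assoc]
    rfl
  have h1 : φ (∑ i, exteriorPower.ιMulti ℂ (k + 2) (e ∘ g i)) = 1 := by
    simp [map_sum, hφ]
  rw [(Submodule.coe_eq_zero).1 (hsum.symm.trans h0), map_zero] at h1
  exact zero_ne_one h1

lemma choose_lt_choose_succ {N k : ℕ} (h : 2 * k + 1 < N) : N.choose k < N.choose (k + 1) := by
  have h1 := Nat.choose_succ_right_eq N k
  have h2 : 0 < N.choose k := Nat.choose_pos (by omega)
  have h3 : k + 1 < N - k := by omega
  by_contra! hle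
  have h4 := Nat.mul_le_mul_right (k + 1) hle
  have h5 := Nat.mul_lt_mul_of_pos_left h3 h2
  omega

lemma choose_lt_choose_add_two {n k : ℕ} (h : k + 2 ≤ n) :
    (2 * n).choose k < (2 * n).choose (k + 2) :=
  (choose_lt_choose_succ (by omega)).trans (choose_lt_choose_succ (by omega))

lemma finrank_exteriorPower (n k : ℕ) :
    finrank ℂ (⋀[ℂ]^k (Fin n ⊕ Fin n → ℂ)) = (2 * n).choose k := by
  rw [exteriorPower.finrank_eq]
  simp [two_mul]

end SpNotDense

open SpNotDense in
/-- For `n ≥ 2`, the standard representation of the symplectic group `Sp_{2n}(ℂ)`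
(matrices `A` with `AᵀJA = J` where `J = [[0, -I_n], [I_n, 0]]`) on `ℂ^{2n}` is not
`m`-dense for `1 < m < 2n - 1`: the induced representation on `⋀^m ℂ^{2n}` is not
irreducible. -/
theorem spC_standard_not_mDense (n : ℕ) (hn : 2 ≤ n) (m : ℕ) (h1 : 1 < m)
    (hm : m < 2 * n - 1) :
    ¬ (⋀[ℂ]^m (Fin n ⊕ Fin n → ℂ) ≠ ⊥ ∧
       ∀ W : Submodule ℂ (ExteriorAlgebra ℂ (Fin n ⊕ Fin n → ℂ)),
         W ≤ ⋀[ℂ]^m (Fin n ⊕ Fin n → ℂ) →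
         (∀ A : Matrix (Fin n ⊕ Fin n) (Fin n ⊕ Fin n) ℂ,
           Aᵀ * Matrix.fromBlocks 0 (-1) 1 0 * A = Matrix.fromBlocks 0 (-1) 1 0 →
           W.map (ExteriorAlgebra.map A.mulVecLin).toLinearMap ≤ W) →
         W = ⊥ ∨ W = ⋀[ℂ]^m (Fin n ⊕ Fin n → ℂ)) := by
  rintro ⟨-, H⟩
  rcases le_or_gt m n with hmn | hmn
  · obtain ⟨k, rfl⟩ : ∃ k, m = k + 2 := ⟨m - 2, by omega⟩
    obtain ⟨x, hx, hx0⟩ := exists_omega_mul_ne_zero (n := n) (k := k) (by omega) (by omega)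
    let W := (⋀[ℂ]^k (Fin n ⊕ Fin n → ℂ)).map (LinearMap.mulLeft ℂ (omega n))
    have hWle : W ≤ ⋀[ℂ]^(k + 2) (Fin n ⊕ Fin n → ℂ) := by
      rintro _ ⟨y, hy, rfl⟩
      exact omega_mul_mem hy
    have hWinv : ∀ A : Matrix (Fin n ⊕ Fin n) (Fin n ⊕ Fin n) ℂ,
        Aᵀ * Matrix.fromBlocks 0 (-1) 1 0 * A = Matrix.fromBlocks 0 (-1) 1 0 →
        W.map (ExteriorAlgebra.map A.mulVecLin).toLinearMap ≤ W := by
      rintro A hA _ ⟨_, ⟨y, hy, rfl⟩, rfl⟩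
      refine ⟨ExteriorAlgebra.map A.mulVecLin y, map_mem _ hy, ?_⟩
      simp [map_omega hA]
    rcases H W hWle hWinv with h | h
    · exact hx0 ((Submodule.mem_bot ℂ).1 (h ▸ (⟨x, hx, rfl⟩ : omega n * x ∈ W)))
    · have hle := Submodule.finrank_map_le (LinearMap.mulLeft ℂ (omega n))
        (⋀[ℂ]^k (Fin n ⊕ Fin n → ℂ))
      rw [show Submodule.map _ _ = _ from h, finrank_exteriorPower, finrank_exteriorPower] at hle
      exact absurd (choose_lt_choose_add_two hmn) hle.not_gt
  · obtain ⟨x, hx, hx0⟩ := exists_omega_mul_ne_zero (n := n) (k := m) (by omega) (by omega)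
    let W := ⋀[ℂ]^m (Fin n ⊕ Fin n → ℂ) ⊓ LinearMap.ker (LinearMap.mulLeft ℂ (omega n))
    have hWinv : ∀ A : Matrix (Fin n ⊕ Fin n) (Fin n ⊕ Fin n) ℂ,
        Aᵀ * Matrix.fromBlocks 0 (-1) 1 0 * A = Matrix.fromBlocks 0 (-1) 1 0 →
        W.map (ExteriorAlgebra.map A.mulVecLin).toLinearMap ≤ W := by
      rintro A hA _ ⟨y, ⟨hy, hy0⟩, rfl⟩
      refine ⟨map_mem _ hy, ?_⟩
      have hy0' : omega n * y = 0 := hy0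
      have h := congrArg (ExteriorAlgebra.map A.mulVecLin) hy0'
      rwa [map_mul, map_omega hA, map_zero] at h
    rcases H W inf_le_left hWinv with h | h
    -- `ω ∧ ·` would embed `⋀^m` into `⋀^{m+2}`, which has smaller dimension
    · let L : ⋀[ℂ]^m (Fin n ⊕ Fin n → ℂ) →ₗ[ℂ] ⋀[ℂ]^(m + 2) (Fin n ⊕ Fin n → ℂ) :=
        (LinearMap.mulLeft ℂ (omega n)).restrict fun _ hy => omega_mul_mem hy
      have hL : Function.Injective L := by
        rw [injective_iff_map_eq_zero]
        rintro ⟨y, hy⟩ hy0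
        have hmem : y ∈ W := ⟨hy, congrArg Subtype.val hy0⟩
        rw [h, Submodule.mem_bot] at hmem
        exact Subtype.ext hmem
      have hle := LinearMap.finrank_le_finrank_of_injective hL
      rw [finrank_exteriorPower, finrank_exteriorPower,
        ← Nat.choose_symm (show m ≤ 2 * n by omega),
        ← Nat.choose_symm (show m + 2 ≤ 2 * n by omega)] at hle
      have hlt := choose_lt_choose_add_two (n := n) (k := 2 * n - (m + 2)) (by omega)
      rw [show 2 * n - (m + 2) + 2 = 2 * n - m by omega] at hlt
      exact absurd hlt hle.not_gt
    · rw [← h] at hx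
      exact hx0 hx.2
end

section
/- For every m ≥ 1, the m-th symmetric power of the standard representation of SL_2(ℂ), realized as the (m+1)-dimensional representation of SL_2(ℂ) on the space of homogeneous polynomials of degree m in two variables x, y (where g ∈ SL_2(ℂ) acts by the linear substitution of variables (x, y) ↦ g⁻¹(x, y)), is thick; that is, it is m'-thick for every 0 < m' < m+1. -/
/-!
Let `k = dim W₁` and let `W` be the space of binary forms of degree `m`. In characteristic zero
a `k`-dimensional space of polynomials in one variable contains, for all but finitely many
points `a`, no nonzero element vanishing to order `k` at `a`
(`finite_setOf_pow_dvd`, an induction on `k` through Wronskians with a fixed element).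
Dehomogenizing, one finds `a ≠ b` such that, with `u = x - a y` and `v = x - b y`, no nonzero
element of `W₁` is divisible by `u ^ k` and no nonzero element of `W₂` is divisible by
`v ^ (m + 1 - k)`.

The forms `u ^ i * v ^ (m - i)` are a basis of `W` (`formBasis`). In this basis `W₁` meets the
span of the vectors with `i ≥ k` trivially, and `W₂` meets the span of those with `i < k`
trivially. The one-parameter subgroup of `SL₂(ℂ)` with `u ↦ c u`, `v ↦ c⁻¹ v` acts
on the basis, up to a common scalar, by `s ^ i` with `s = c ^ 2`. As `s → 0` it contracts `W₁`
towards the span of the vectors with `i < k`, which is transverse to `W₂`; hence for small `s`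
the image of `W₁` meets `W₂` trivially (`exists_scaling_disjoint`), and a dimension count
finishes the proof.
-/

open Module MvPolynomial

/-- Substitution of the variables of a polynomial in two variables by the linear forms given
by the rows of a matrix `A`: the algebra map sending `X i` to `∑ j, A i j • X j`, i.e. the
linear substitution of variables `(x, y) ↦ A (x, y)`. -/
noncomputable def substPoly (A : Matrix (Fin 2) (Fin 2) ℂ) :
    MvPolynomial (Fin 2) ℂ →ₐ[ℂ] MvPolynomial (Fin 2) ℂ :=
  aeval fun i => ∑ j, A i j • X j

lemma substPoly_mem_homogeneous (A : Matrix (Fin 2) (Fin 2) ℂ) (m : ℕ)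
    (p : MvPolynomial (Fin 2) ℂ) (hp : p ∈ homogeneousSubmodule (Fin 2) ℂ m) :
    substPoly A p ∈ homogeneousSubmodule (Fin 2) ℂ m := by
  rw [mem_homogeneousSubmodule] at hp ⊢
  have hg : ∀ i, ((∑ j, A i j • X j : MvPolynomial (Fin 2) ℂ)).IsHomogeneous 1 := by
    intro i
    rw [← mem_homogeneousSubmodule]
    exact Submodule.sum_mem _ fun j _ => Submodule.smul_mem _ _
      ((mem_homogeneousSubmodule _ _).2 (isHomogeneous_X ℂ j))
  have h := hp.aeval (fun i => ∑ j, A i j • X j) hg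
  rw [one_mul] at h
  exact h

/-- The action on the space of homogeneous polynomials of degree `m` in two variables induced
by the linear substitution of variables given by the matrix `A`. -/
noncomputable def substHomogeneous (A : Matrix (Fin 2) (Fin 2) ℂ) (m : ℕ) :
    homogeneousSubmodule (Fin 2) ℂ m →ₗ[ℂ] homogeneousSubmodule (Fin 2) ℂ m :=
  (substPoly A).toLinearMap.restrict (substPoly_mem_homogeneous A m)

/-! ### Order of vanishing at a general point -/

/-- If `g` vanishes at a point where `f` does not and the Wronskian of `f` and `g` is zero, then
`g = 0`: otherwise `f g' = f' g` would make `g'` vanish to at least the order of `g`. -/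
lemma eq_zero_of_wronskian_eq_zero {f g : Polynomial ℂ} {a : ℂ} (hf : f.eval a ≠ 0)
    (hg : g.eval a = 0) (h : Polynomial.wronskian f g = 0) : g = 0 := by
  by_contra hg0
  have hroot : g.IsRoot a := hg
  have hpos := (Polynomial.rootMultiplicity_pos hg0).2 hroot
  have hmul := Polynomial.derivative_rootMultiplicity_of_root hroot
  have hdvd := Polynomial.pow_rootMultiplicity_dvd g a
  have heq : f * Polynomial.derivative g = Polynomial.derivative f * g := sub_eq_zero.1 h
  have hd : (Polynomial.X - Polynomial.C a) ^ g.rootMultiplicity a ∣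
      f * Polynomial.derivative g := heq ▸ hdvd.mul_left _
  have hcop : IsCoprime ((Polynomial.X - Polynomial.C a) ^ g.rootMultiplicity a) f := by
    apply IsCoprime.pow_left
    rw [(Polynomial.irreducible_X_sub_C a).coprime_iff_not_dvd, Polynomial.dvd_iff_isRoot]
    exact hf
  have hd' := hcop.dvd_of_dvd_mul_left hd
  have hder0 : Polynomial.derivative g ≠ 0 := by
    intro h0
    have := Polynomial.derivative_eq_zero.1 h0
    rw [Polynomial.eq_C_of_natDegree_eq_zero this] at hg hg0
    simp at hg hg0
    exact hg0 hg
  have := (Polynomial.le_rootMultiplicity_iff hder0).2 hd'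
  omega

lemma finite_setOf_pow_dvd (k : ℕ) : ∀ W : Submodule ℂ (Polynomial ℂ), FiniteDimensional ℂ W →
    finrank ℂ W ≤ k →
    {a : ℂ | ∃ g ∈ W, g ≠ 0 ∧ (Polynomial.X - Polynomial.C a) ^ k ∣ g}.Finite := by
  induction k with
  | zero =>
    intro W _ hW
    have : W = ⊥ := Submodule.finrank_eq_zero.1 (Nat.le_zero.1 hW)
    subst this
    convert Set.finite_empty
    ext a
    simp
  | succ k ih =>
    intro W _ hW
    by_cases hbot : W = ⊥
    · subst hbot
      convert Set.finite_empty
      ext a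
      simp
    obtain ⟨f, hfW, hf0⟩ := Submodule.exists_mem_ne_zero_of_ne_bot hbot
    -- The Wronskian with `f` kills `f`, so it maps `W` onto a space of smaller dimension.
    let φ : W →ₗ[ℂ] Polynomial ℂ := (Polynomial.wronskianBilin ℂ f).domRestrict W
    have hker : 0 < finrank ℂ (LinearMap.ker φ) := by
      have hmem : (⟨f, hfW⟩ : W) ∈ LinearMap.ker φ := Polynomial.wronskian_self_eq_zero f
      have hne : (⟨⟨f, hfW⟩, hmem⟩ : LinearMap.ker φ) ≠ 0 := by
        simpa [Subtype.ext_iff] using hf0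
      have : Nontrivial (LinearMap.ker φ) := ⟨⟨_, _, hne⟩⟩
      exact Module.finrank_pos (R := ℂ) (M := LinearMap.ker φ)
    have hrank := LinearMap.finrank_range_add_finrank_ker φ
    have hfin := ih (LinearMap.range φ) inferInstance (by omega)
    refine (hfin.union f.roots.toFinset.finite_toSet).subset ?_
    rintro a ⟨g, hgW, hg0, hdvd⟩
    by_cases hfa : f.eval a = 0
    · right
      simpa [hf0] using hfa
    left
    refine ⟨Polynomial.wronskian f g, ⟨⟨g, hgW⟩, rfl⟩, ?_, ?_⟩
    · intro h0
      apply hg0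
      refine eq_zero_of_wronskian_eq_zero hfa ?_ h0
      have := (dvd_pow_self _ (Nat.succ_ne_zero k)).trans hdvd
      exact Polynomial.dvd_iff_isRoot.1 this
    · have h1 := Polynomial.pow_sub_one_dvd_derivative_of_pow_dvd hdvd
      exact dvd_sub (h1.mul_left _) (((pow_dvd_pow _ (Nat.le_succ k)).trans hdvd).mul_left _)

/-! ### Contraction by a diagonal one-parameter family -/

lemma exists_bound_of_injOn {V E F : Type*} [AddCommGroup V] [Module ℂ V]
    [NormedAddCommGroup E] [NormedSpace ℂ E] [FiniteDimensional ℂ E]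
    [NormedAddCommGroup F] [NormedSpace ℂ F]
    (W : Submodule ℂ V) (p : V →ₗ[ℂ] E) (q : V →ₗ[ℂ] F) (hp : ∀ w ∈ W, p w = 0 → w = 0) :
    ∃ K : ℝ, 0 ≤ K ∧ ∀ w ∈ W, ‖q w‖ ≤ K * ‖p w‖ := by
  have hker : LinearMap.ker (p.domRestrict W) = ⊥ := by
    rw [LinearMap.ker_eq_bot']
    intro w hw
    exact Subtype.ext (hp w w.2 hw)
  obtain ⟨r, hr⟩ := LinearMap.exists_leftInverse_of_injective _ hker
  let T : E →L[ℂ] F := LinearMap.toContinuousLinearMap (q ∘ₗ W.subtype ∘ₗ r)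
  refine ⟨‖T‖, norm_nonneg _, fun w hw => ?_⟩
  have h : r (p w) = ⟨w, hw⟩ := LinearMap.congr_fun hr ⟨w, hw⟩
  have hT : T (p w) = q w := by
    simp [T, h]
  rw [← hT]
  exact T.le_opNorm _

/-- If `W₁` meets the span of the basis vectors with index `≥ k` trivially, and `W₂` meets the
span of those with index `< k` trivially, then scaling the `i`-th coordinate by `s ^ i` for some
`s = c ^ 2` moves `W₁` off `W₂`. -/
lemma exists_scaling_disjoint {V : Type*} [AddCommGroup V] [Module ℂ V] {n : ℕ}
    (b : Basis (Fin n) ℂ V) (k : ℕ) (W₁ W₂ : Submodule ℂ V)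
    (h₁ : ∀ w ∈ W₁, (∀ i : Fin n, (i : ℕ) < k → b.repr w i = 0) → w = 0)
    (h₂ : ∀ w ∈ W₂, (∀ i : Fin n, k ≤ (i : ℕ) → b.repr w i = 0) → w = 0) :
    ∃ c : ℂ, c ≠ 0 ∧ ∀ w ∈ W₁, ∀ w' ∈ W₂,
      (∀ i : Fin n, b.repr w' i = (c ^ 2) ^ (i : ℕ) * b.repr w i) → w = 0 := by
  -- `p` and `q` record the coordinates with index `< k` and `≥ k`.
  let p : V →ₗ[ℂ] ({i : Fin n // (i : ℕ) < k} → ℂ) := LinearMap.pi fun i => b.coord i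
  let q : V →ₗ[ℂ] ({i : Fin n // k ≤ (i : ℕ)} → ℂ) := LinearMap.pi fun i => b.coord i
  have hp : ∀ w ∈ W₁, p w = 0 → w = 0 := fun w hw h =>
    h₁ w hw fun i hi => congrFun h ⟨i, hi⟩
  have hq : ∀ w ∈ W₂, q w = 0 → w = 0 := fun w hw h =>
    h₂ w hw fun i hi => congrFun h ⟨i, hi⟩
  obtain ⟨K, hK, hKq⟩ := exists_bound_of_injOn W₁ p q hp
  obtain ⟨L, hL, hLp⟩ := exists_bound_of_injOn W₂ q p hq
  -- On `W₁ ∩ s⁻¹ W₂` one gets `‖p w‖ ≤ s * L * K * ‖p w‖`, so `s * L * K < 1` suffices.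
  have hpos : 0 < 1 + L * K := by positivity
  set r : ℝ := (1 + L * K)⁻¹ with hr
  have hr0 : 0 < r := inv_pos.2 hpos
  have hr1 : r ≤ 1 := inv_le_one_of_one_le₀ (by nlinarith [mul_nonneg hL hK])
  have hrLK : r * (L * K) < 1 := by
    rw [hr, inv_mul_lt_iff₀ hpos]
    linarith
  have hs0 : 0 < r ^ 2 := by positivity
  have hs1 : r ^ 2 ≤ 1 := pow_le_one₀ hr0.le hr1
  have hsr : r ^ 2 ≤ r := by nlinarith
  refine ⟨(r : ℂ), by exact_mod_cast hr0.ne', fun w hw w' hw' hww' => hp w hw ?_⟩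
  set s : ℝ := r ^ 2 with hs
  have hn : ∀ i : Fin n, ‖b.repr w' i‖ = s ^ (i : ℕ) * ‖b.repr w i‖ := by
    intro i
    rw [hww' i, norm_mul, norm_pow, norm_pow, Complex.norm_real, Real.norm_of_nonneg hr0.le]
  have hlow : s ^ k * ‖p w‖ ≤ s * ‖p w'‖ := by
    have : ‖p w‖ ≤ (s ^ k)⁻¹ * (s * ‖p w'‖) := by
      rw [pi_norm_le_iff_of_nonneg (by positivity)]
      intro i
      rw [le_inv_mul_iff₀ (by positivity)]
      calc s ^ k * ‖b.repr w i‖ ≤ s ^ ((i : ℕ) + 1) * ‖b.repr w i‖ := by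
            gcongr ?_ * _
            exact pow_le_pow_of_le_one hs0.le hs1 i.2
        _ = s * ‖p w' i‖ := by
            change _ = s * ‖b.repr w' i‖
            rw [hn]; ring
        _ ≤ s * ‖p w'‖ := by
            gcongr
            exact norm_le_pi_norm (p w') i
    rwa [le_inv_mul_iff₀ (by positivity)] at this
  have hhigh : ‖q w'‖ ≤ s ^ k * ‖q w‖ := by
    rw [pi_norm_le_iff_of_nonneg (by positivity)]
    intro i
    calc ‖b.repr w' i‖ = s ^ (i : ℕ) * ‖b.repr w i‖ := hn i
      _ ≤ s ^ k * ‖q w‖ := by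
        gcongr ?_ * ?_
        · exact pow_le_pow_of_le_one hs0.le hs1 i.2
        · exact norm_le_pi_norm (q w) i
  have key : s ^ k * ‖p w‖ ≤ s ^ k * (s * (L * K) * ‖p w‖) :=
    calc s ^ k * ‖p w‖ ≤ s * ‖p w'‖ := hlow
      _ ≤ s * (L * (s ^ k * (K * ‖p w‖))) := by
        gcongr
        exact (hLp w' hw').trans (by gcongr; exact hhigh.trans (by gcongr; exact hKq w hw))
      _ = _ := by ring
  have key2 := le_of_mul_le_mul_left key (by positivity)
  have hlt : s * (L * K) < 1 := lt_of_le_of_lt (by gcongr) hrLK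
  rw [← norm_le_zero_iff]
  nlinarith [norm_nonneg (p w)]

/-! ### Binary forms -/

lemma substPoly_substPoly (A B : Matrix (Fin 2) (Fin 2) ℂ) (p : MvPolynomial (Fin 2) ℂ) :
    substPoly A (substPoly B p) = substPoly (B * A) p := by
  have : (substPoly A).comp (substPoly B) = substPoly (B * A) := by
    ext1 i
    simp only [substPoly, AlgHom.comp_apply, aeval_X, Fin.sum_univ_two, map_add, map_smul,
      Matrix.mul_apply]
    module
  exact DFunLike.congr_fun this p

lemma substPoly_one (p : MvPolynomial (Fin 2) ℂ) : substPoly 1 p = p := by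
  have : substPoly 1 = AlgHom.id ℂ _ := by
    ext1 i
    fin_cases i <;> simp [substPoly, Matrix.one_apply]
  rw [this]; rfl

lemma substHomogeneous_injective {A : Matrix (Fin 2) (Fin 2) ℂ} (hA : IsUnit A.det) (m : ℕ) :
    Function.Injective (substHomogeneous A m) := by
  intro p q h
  have h' : substPoly A p = substPoly A q := congrArg Subtype.val h
  have := congrArg (substPoly A⁻¹) h'
  rw [substPoly_substPoly, substPoly_substPoly, Matrix.mul_nonsing_inv _ hA, substPoly_one,
    substPoly_one] at this
  exact Subtype.ext this

/-- The monomial `x ^ i * y ^ (m - i)`, as a form of degree `m`. -/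
noncomputable def monoForm (m : ℕ) (i : Fin (m + 1)) : homogeneousSubmodule (Fin 2) ℂ m :=
  ⟨X 0 ^ (i : ℕ) * X 1 ^ (m - i), by
    have h := (isHomogeneous_X_pow (R := ℂ) (0 : Fin 2) (i : ℕ)).mul
      (isHomogeneous_X_pow (R := ℂ) (1 : Fin 2) (m - i))
    rwa [Nat.add_sub_cancel' (Nat.lt_succ_iff.1 i.2)] at h⟩

/-- Dehomogenization `x ↦ t`, `y ↦ 1`, from forms of degree `m` to polynomials in `t`. -/
noncomputable def dehom (m : ℕ) : homogeneousSubmodule (Fin 2) ℂ m →ₗ[ℂ] Polynomial ℂ :=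
  (aeval ![Polynomial.X, 1] : MvPolynomial (Fin 2) ℂ →ₐ[ℂ] Polynomial ℂ).toLinearMap.domRestrict _

lemma dehom_apply (m : ℕ) (p : homogeneousSubmodule (Fin 2) ℂ m) :
    dehom m p = aeval ![Polynomial.X, 1] (p : MvPolynomial (Fin 2) ℂ) := rfl

lemma homogenize_dehom (m : ℕ) (p : homogeneousSubmodule (Fin 2) ℂ m) :
    (dehom m p).homogenize m = p :=
  Polynomial.homogenize_eq_of_isHomogeneous ((mem_homogeneousSubmodule _ _).1 p.2) rfl

lemma eq_zero_of_dehom_eq_zero {m : ℕ} {p : homogeneousSubmodule (Fin 2) ℂ m}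
    (h : dehom m p = 0) : p = 0 := by
  have := homogenize_dehom m p
  rw [h, Polynomial.homogenize_zero] at this
  exact Subtype.ext this.symm

lemma dehom_monoForm (m : ℕ) (i : Fin (m + 1)) :
    dehom m (monoForm m i) = Polynomial.X ^ (i : ℕ) := by
  simp [dehom_apply, monoForm]

lemma linearIndependent_monoForm (m : ℕ) : LinearIndependent ℂ (monoForm m) := by
  apply LinearIndependent.of_comp (dehom m)
  have h : LinearIndependent ℂ (fun i : ℕ => (Polynomial.X ^ i : Polynomial ℂ)) := by
    have := (Polynomial.basisMonomials ℂ).linearIndependent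
    simpa [Polynomial.coe_basisMonomials, ← Polynomial.X_pow_eq_monomial] using this
  have h2 := h.comp (fun i : Fin (m + 1) => (i : ℕ)) Fin.val_injective
  convert h2 using 1
  ext1 i
  exact dehom_monoForm m i

lemma span_monoForm (m : ℕ) : ⊤ ≤ Submodule.span ℂ (Set.range (monoForm m)) := by
  intro p _
  have hsum : p = ∑ i : Fin (m + 1), (dehom m p).coeff i • monoForm m i := by
    apply Subtype.ext
    conv_lhs => rw [← homogenize_dehom m p, Polynomial.homogenize,
      Finset.Nat.sum_antidiagonal_eq_sum_range_succ_mk, Finset.sum_range]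
    rw [AddSubmonoidClass.coe_finsetSum]
    refine Finset.sum_congr rfl fun i _ => ?_
    simp [monoForm, MvPolynomial.monomial_eq, Finsupp.prod_fintype, Fin.prod_univ_two,
      MvPolynomial.smul_eq_C_mul]
  rw [hsum]
  exact Submodule.sum_mem _ fun i _ => Submodule.smul_mem _ _
    (Submodule.subset_span ⟨i, rfl⟩)

/-- The monomial basis of the space of binary forms of degree `m`. -/
noncomputable def monoBasis (m : ℕ) :
    Basis (Fin (m + 1)) ℂ (homogeneousSubmodule (Fin 2) ℂ m) :=
  Basis.mk (linearIndependent_monoForm m) (span_monoForm m)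

lemma finrank_forms (m : ℕ) : finrank ℂ (homogeneousSubmodule (Fin 2) ℂ m) = m + 1 := by
  simpa using finrank_eq_card_basis (monoBasis m)

lemma finite_forms (m : ℕ) : FiniteDimensional ℂ (homogeneousSubmodule (Fin 2) ℂ m) :=
  (monoBasis m).finiteDimensional_of_finite

/-- The basis `u ^ i * v ^ (m - i)` of the forms of degree `m`, where the linear forms `u`, `v`
are given by the rows of the invertible matrix `G`. -/
noncomputable def formBasis {G : Matrix (Fin 2) (Fin 2) ℂ} (hG : IsUnit G.det) (m : ℕ) :
    Basis (Fin (m + 1)) ℂ (homogeneousSubmodule (Fin 2) ℂ m) :=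
  haveI := finite_forms m
  (monoBasis m).map (LinearEquiv.ofInjectiveEndo _ (substHomogeneous_injective hG m))

lemma coe_formBasis {G : Matrix (Fin 2) (Fin 2) ℂ} (hG : IsUnit G.det) (m : ℕ)
    (i : Fin (m + 1)) :
    (formBasis hG m i : MvPolynomial (Fin 2) ℂ) =
      substPoly G (X 0) ^ (i : ℕ) * substPoly G (X 1) ^ (m - i) := by
  have : (formBasis hG m i : MvPolynomial (Fin 2) ℂ) = substPoly G (monoForm m i) := by
    simp only [formBasis, monoBasis, Basis.map_apply, Basis.mk_apply]
    rfl
  rw [this]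
  simp [monoForm]

lemma dvd_of_repr {m : ℕ} (b : Basis (Fin (m + 1)) ℂ (homogeneousSubmodule (Fin 2) ℂ m))
    (w : homogeneousSubmodule (Fin 2) ℂ m) (d : MvPolynomial (Fin 2) ℂ)
    (h : ∀ i, b.repr w i ≠ 0 → d ∣ b i) : d ∣ w := by
  have hsum : (w : MvPolynomial (Fin 2) ℂ) = ∑ i, b.repr w i • (b i : MvPolynomial (Fin 2) ℂ) := by
    conv_lhs => rw [← b.sum_repr w]
    rw [AddSubmonoidClass.coe_finsetSum]
    rfl
  rw [hsum]
  refine Finset.dvd_sum fun i _ => ?_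
  by_cases hi : b.repr w i = 0
  · simp [hi]
  · exact (h i hi).trans (by rw [smul_eq_C_mul]; exact dvd_mul_left _ _)

/-- For all but finitely many `a`, no nonzero form of a `k`-dimensional space is divisible by
`(x - a y) ^ k`. -/
lemma finite_setOf_form_pow_dvd {m : ℕ} (W : Submodule ℂ (homogeneousSubmodule (Fin 2) ℂ m)) :
    {a : ℂ | ∃ w ∈ W, w ≠ 0 ∧
      (X 0 - C a * X 1 : MvPolynomial (Fin 2) ℂ) ^ finrank ℂ W ∣ w}.Finite := by
  have := finite_forms m
  refine (finite_setOf_pow_dvd (finrank ℂ W) (W.map (dehom m)) inferInstance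
    (Submodule.finrank_map_le _ _)).subset ?_
  rintro a ⟨w, hw, hw0, hdvd⟩
  refine ⟨dehom m w, ⟨w, hw, rfl⟩, fun h => hw0 (eq_zero_of_dehom_eq_zero h), ?_⟩
  have := map_dvd (aeval ![Polynomial.X, 1] : MvPolynomial (Fin 2) ℂ →ₐ[ℂ] Polynomial ℂ) hdvd
  simpa [dehom_apply] using this

/-- For `m ≥ 1`, the `m`-th symmetric power of the standard representation of `SL_2(ℂ)`,
realized as the `(m+1)`-dimensional space of homogeneous polynomials of degree `m` in two
variables on which a matrix `A` of determinant `1` acts by the substitution of variables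
`(x, y) ↦ A⁻¹ (x, y)`, is thick: for every `0 < m' < m + 1` and all subspaces `W₁, W₂` with
`dim W₁ = m'` and `dim W₂ = (m + 1) - m'`, some `A ∈ SL_2(ℂ)` moves `W₁` to a complement
of `W₂`. -/
theorem symmPower_sl2_thick (m : ℕ) (hm : 1 ≤ m) (m' : ℕ) (h0 : 0 < m') (h1 : m' < m + 1)
    (W₁ W₂ : Submodule ℂ (homogeneousSubmodule (Fin 2) ℂ m))
    (d₁ : finrank ℂ W₁ = m') (d₂ : finrank ℂ W₂ = (m + 1) - m') :
    ∃ A : Matrix (Fin 2) (Fin 2) ℂ, A.det = 1 ∧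
      IsCompl (W₁.map (substHomogeneous A⁻¹ m)) W₂ := by
  have := finite_forms m
  obtain ⟨a, ha⟩ := (finite_setOf_form_pow_dvd W₁).exists_notMem
  obtain ⟨b, hb⟩ := ((finite_setOf_form_pow_dvd W₂).union (Set.finite_singleton a)).exists_notMem
  rw [Set.mem_union, not_or, Set.mem_singleton_iff] at hb
  obtain ⟨hb, hba⟩ := hb
  rw [d₁] at ha
  rw [d₂] at hb
  let G : Matrix (Fin 2) (Fin 2) ℂ := !![1, -a; 1, -b]
  have hG : IsUnit G.det := by
    rw [isUnit_iff_ne_zero, Matrix.det_fin_two_of]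
    intro h
    apply hba
    linear_combination -h
  have hu : substPoly G (X 0) = X 0 - C a * X 1 := by
    simp [substPoly, G, smul_eq_C_mul, sub_eq_add_neg]
  have hv : substPoly G (X 1) = X 0 - C b * X 1 := by
    simp [substPoly, G, smul_eq_C_mul, sub_eq_add_neg]
  obtain ⟨c, hc, hsep⟩ := exists_scaling_disjoint (formBasis hG m) m' W₁ W₂
    (by
      intro w hw h
      by_contra hw0
      refine ha ⟨w, hw, hw0, dvd_of_repr (formBasis hG m) w _ fun i hi => ?_⟩
      have him : m' ≤ (i : ℕ) := not_lt.1 fun hlt => hi (h i hlt)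
      rw [coe_formBasis, hu]
      exact (pow_dvd_pow _ him).mul_right _)
    (by
      intro w hw h
      by_contra hw0
      refine hb ⟨w, hw, hw0, dvd_of_repr (formBasis hG m) w _ fun i hi => ?_⟩
      have him : (i : ℕ) < m' := not_le.1 fun hle => hi (h i hle)
      rw [coe_formBasis, hv]
      exact (pow_dvd_pow _ (by omega)).mul_left _)
  let D : Matrix (Fin 2) (Fin 2) ℂ := !![c, 0; 0, c⁻¹]
  have hD : D.det = 1 := by simp [D, Matrix.det_fin_two_of, hc]
  -- `B` is the substitution `u ↦ c u`, `v ↦ c⁻¹ v`.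
  let B : Matrix (Fin 2) (Fin 2) ℂ := G⁻¹ * D * G
  have hB : B.det = 1 := by
    have : G⁻¹.det * G.det = 1 := by
      rw [← Matrix.det_mul, Matrix.nonsing_inv_mul _ hG, Matrix.det_one]
    simp only [B, Matrix.det_mul, hD]
    linear_combination this
  have hBu : IsUnit B.det := by rw [hB]; exact isUnit_one
  have hGB : G * B = D * G := by
    simp only [B, ← mul_assoc, Matrix.mul_nonsing_inv _ hG, one_mul]
  have hBX : ∀ i, substPoly B (substPoly G (X i)) = substPoly G (substPoly D (X i)) := by
    intro i
    rw [substPoly_substPoly, substPoly_substPoly, hGB]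
  have hB0 : substPoly B (substPoly G (X 0)) = c • substPoly G (X 0) := by
    rw [hBX, ← map_smul]
    simp [substPoly, D]
  have hB1 : substPoly B (substPoly G (X 1)) = c⁻¹ • substPoly G (X 1) := by
    rw [hBX, ← map_smul]
    simp [substPoly, D]
  have hbasis : ∀ i, substHomogeneous B m (formBasis hG m i) =
      (c⁻¹ ^ m * (c ^ 2) ^ (i : ℕ)) • formBasis hG m i := by
    intro i
    apply Subtype.ext
    change substPoly B (formBasis hG m i) = _ • (formBasis hG m i : MvPolynomial (Fin 2) ℂ)
    rw [coe_formBasis, map_mul, map_pow, map_pow, hB0, hB1, smul_pow, smul_pow, smul_mul_smul_comm]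
    congr 1
    have him : c⁻¹ ^ m = c⁻¹ ^ (i : ℕ) * c⁻¹ ^ (m - i) := by
      rw [← pow_add]
      congr 1
      omega
    have hci : c⁻¹ ^ (i : ℕ) * (c ^ 2) ^ (i : ℕ) = c ^ (i : ℕ) := by
      rw [← mul_pow]
      congr 1
      field_simp
    rw [him, mul_right_comm, hci]
  have hrepr : ∀ w i, (formBasis hG m).repr (substHomogeneous B m w) i =
      c⁻¹ ^ m * ((c ^ 2) ^ (i : ℕ) * (formBasis hG m).repr w i) := by
    intro w i
    conv_lhs => rw [← (formBasis hG m).sum_repr w]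
    simp only [map_sum, map_smul, hbasis, Finsupp.coe_finsetSum, Finset.sum_apply,
      Finsupp.smul_apply, Basis.repr_self, Finsupp.single_apply, smul_eq_mul]
    simp
    ring
  refine ⟨B⁻¹, ?_, ?_⟩
  · rw [Matrix.det_nonsing_inv, hB, Ring.inverse_one]
  rw [Matrix.nonsing_inv_nonsing_inv _ hBu]
  have hdisj : Disjoint (W₁.map (substHomogeneous B m)) W₂ := by
    rw [Submodule.disjoint_def]
    rintro _ ⟨w, hw, rfl⟩ hw2
    have : w = 0 := by
      refine hsep w hw (c ^ m • substHomogeneous B m w) (W₂.smul_mem _ hw2) fun i => ?_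
      rw [map_smul, Finsupp.smul_apply, hrepr, smul_eq_mul, ← mul_assoc, ← mul_pow,
        mul_inv_cancel₀ hc, one_pow, one_mul]
    rw [this, map_zero]
  refine ⟨hdisj, codisjoint_iff.2 (Submodule.eq_top_of_disjoint _ _ ?_ hdisj)⟩
  have hmap : finrank ℂ (W₁.map (substHomogeneous B m)) = m' := by
    rw [← d₁]
    exact (Submodule.equivMapOfInjective _ (substHomogeneous_injective hBu m) W₁).finrank_eq.symm
  rw [hmap, d₂, finrank_forms]
  omega
end
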